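/- Let 1 ≤ r < n and let I, J, K be r-element subsets of [n] = {1,…,n}. Then (μ(I), μ(J), μ(K)) ∈ Horn(r) if and only if (μ((I^o)^c), μ((J^o)^c), μ((K^o)^c)) ∈ Horn(n−r), where for A ⊂ [n], A^o = {n+1−a : a ∈ A} and A^c = [n] \ A. -/

import Mathlib

open Matrix

/-- Eigenvalues of a (Hermitian) complex matrix, listed in decreasing order. -/
noncomputable def eigVec {k : ℕ} (X : Matrix (Fin k) (Fin k) ℂ) (hX : X.IsHermitian) :
    Fin k → ℝ :=
  fun i => hX.eigenvalues (Tuple.sort hX.eigenvalues i.rev)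

/-- The `i`-th (0-based) singular value of a rectangular complex matrix:
the square root of the `i`-th largest eigenvalue of `Y * Yᴴ` (and `0` for `i ≥ a`). -/
noncomputable def sval {a b : ℕ} (Y : Matrix (Fin a) (Fin b) ℂ) (i : ℕ) : ℝ :=
  if h : i < a then
    Real.sqrt (eigVec (Y * Yᴴ) (Matrix.isHermitian_mul_conjTranspose_self Y) ⟨i, h⟩)
  else 0

/-- The Horn cone `Horn(k)`. -/
def Horn (k : ℕ) : Set ((Fin k → ℝ) × (Fin k → ℝ) × (Fin k → ℝ)) :=
  { v | ∃ (X Y : Matrix (Fin k) (Fin k) ℂ) (hX : X.IsHermitian) (hY : Y.IsHermitian),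
      v.1 = eigVec X hX ∧ v.2.1 = eigVec Y hY ∧ v.2.2 = eigVec (X + Y) (hX.add hY) }

/-- The Littlewood–Richardson cone `LR(m,n)`. -/
def LRcone (m n : ℕ) : Set ((Fin (m + n) → ℝ) × (Fin m → ℝ) × (Fin n → ℝ)) :=
  { v | ∃ (M : Matrix (Fin (m + n)) (Fin (m + n)) ℂ) (hM : M.IsHermitian),
      v.1 = eigVec M hM ∧
      v.2.1 = eigVec (M.submatrix (Fin.castAdd n) (Fin.castAdd n))
        (hM.submatrix (Fin.castAdd n)) ∧
      v.2.2 = eigVec (M.submatrix (Fin.natAdd m) (Fin.natAdd m))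
        (hM.submatrix (Fin.natAdd m)) }

/-- Top-left `p × p` block. -/
def blockTL (p q : ℕ) (X : Matrix (Fin (p + q)) (Fin (p + q)) ℂ) : Matrix (Fin p) (Fin p) ℂ :=
  X.submatrix (Fin.castAdd q) (Fin.castAdd q)

/-- Top-right `p × q` block. -/
def blockTR (p q : ℕ) (X : Matrix (Fin (p + q)) (Fin (p + q)) ℂ) : Matrix (Fin p) (Fin q) ℂ :=
  X.submatrix (Fin.castAdd q) (Fin.natAdd p)

/-- Bottom-left `q × p` block. -/
def blockBL (p q : ℕ) (X : Matrix (Fin (p + q)) (Fin (p + q)) ℂ) : Matrix (Fin q) (Fin p) ℂ :=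
  X.submatrix (Fin.natAdd p) (Fin.castAdd q)

/-- Bottom-right `q × q` block. -/
def blockBR (p q : ℕ) (X : Matrix (Fin (p + q)) (Fin (p + q)) ℂ) : Matrix (Fin q) (Fin q) ℂ :=
  X.submatrix (Fin.natAdd p) (Fin.natAdd p)

/-- `λ* = (−λ_k, …, −λ_1)`. -/
def starVec {k : ℕ} (x : Fin k → ℝ) : Fin k → ℝ := fun i => -x i.rev

/-- `ŝ^{p,q} = (s₁, …, s_q, 0, …, 0, −s_q, …, −s₁) ∈ ℝ^{p+q}` (with `p − q` middle zeros). -/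
noncomputable def hatPQ (p q : ℕ) (s : Fin q → ℝ) : Fin (p + q) → ℝ :=
  fun i =>
    if h : (i : ℕ) < q then s ⟨i, h⟩
    else if h' : (i : ℕ) < p then 0
    else -s ⟨p + q - 1 - i, by have := i.isLt; omega⟩

/-- The cone `A(p,q)`: pairs `(e(X), s(X₁₂))` for `X` Hermitian of size `p+q`. -/
def coneA (p q : ℕ) : Set ((Fin (p + q) → ℝ) × (Fin q → ℝ)) :=
  { v | ∃ (X : Matrix (Fin (p + q)) (Fin (p + q)) ℂ) (hX : X.IsHermitian),
      v.1 = eigVec X hX ∧ ∀ i : Fin q, v.2 i = sval (blockTR p q X) (i : ℕ) }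

/-- The cone `S(p,q)`: triples `(s(X), s(X₁₂), s(X₂₁))`. -/
def coneS (p q : ℕ) : Set ((Fin (p + q) → ℝ) × (Fin q → ℝ) × (Fin q → ℝ)) :=
  { v | ∃ X : Matrix (Fin (p + q)) (Fin (p + q)) ℂ,
      (∀ i : Fin (p + q), v.1 i = sval X (i : ℕ)) ∧
      (∀ i : Fin q, v.2.1 i = sval (blockTR p q X) (i : ℕ)) ∧
      (∀ i : Fin q, v.2.2 i = sval (blockBL p q X) (i : ℕ)) }

/-- The cone `T(p,q)`: triples `(s(X), s(X₁₁), s(X₂₂))`. -/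
def coneT (p q : ℕ) : Set ((Fin (p + q) → ℝ) × (Fin p → ℝ) × (Fin q → ℝ)) :=
  { v | ∃ X : Matrix (Fin (p + q)) (Fin (p + q)) ℂ,
      (∀ i : Fin (p + q), v.1 i = sval X (i : ℕ)) ∧
      (∀ i : Fin p, v.2.1 i = sval (blockTL p q X) (i : ℕ)) ∧
      (∀ i : Fin q, v.2.2 i = sval (blockBR p q X) (i : ℕ)) }

/-- `μ(A) = (a_r − r ≥ … ≥ a₂ − 2 ≥ a₁ − 1)` as a decreasing real vector, for
`A = {a₁ < … < a_r}` a subset of `[n]` (0-based indexing internally). -/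
noncomputable def muVec {n r : ℕ} (A : Finset (Fin n)) (h : A.card = r) : Fin r → ℝ :=
  fun k => (((A.orderIsoOfFin h k.rev : Fin n) : ℕ) : ℝ) - ((k.rev : ℕ) : ℝ)

/-- `A^o = {ℓ + 1 − a : a ∈ A}` inside `[ℓ]`. -/
def opp {n : ℕ} (A : Finset (Fin n)) : Finset (Fin n) := A.image Fin.rev

/-- `|s|_{K ∩ [q]}` where `K ⊆ [n]`, `s ∈ ℝ^q` and `[q]` is viewed inside `[n]`. -/
noncomputable def sumRestr {n q : ℕ} (s : Fin q → ℝ) (K : Finset (Fin n)) : ℝ :=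
  ∑ i ∈ K, (if h : (i : ℕ) < q then s ⟨i, h⟩ else 0)

/-- The augmented matrix `Ŷ^{p,q} = [[0, Y], [Yᴴ, 0]]` of size `p + q`. -/
def hatM (p q : ℕ) (Y : Matrix (Fin p) (Fin q) ℂ) : Matrix (Fin (p + q)) (Fin (p + q)) ℂ :=
  Matrix.reindex finSumFinEquiv finSumFinEquiv (Matrix.fromBlocks 0 Y Yᴴ 0)

open Filter Topology Module

/-!
Let `X`, `Y` and `X + Y` be Hermitian matrices of size `r` whose eigenvalues are integers in
`[0, m]`. Then `X`, `Y` and `m - (X + Y)` sum to the scalar `m`, and each of them is the sum of the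
orthogonal projections onto a flag of spectral subspaces `A (j, q)`, `q < m`. A family of subspaces
whose projections sum to `m` satisfies the slope inequality `∑ p, dim (A p ⊓ U) ≤ m * dim U`, and,
dimensions being integers, so does every nearby family. By an argument of Schofield, the relations
with generic coefficients in `ℂ^m` between vectors of a generic nearby family are then trivial.

These coefficients form a triple of `m × m` matrices, which Gram–Schmidt, compatibly with the flags,
makes unitary. Among all unitary triples `u`, one that maximizes the absolute value of the
determinant of the relation map satisfies the critical equation
`∑ j, (u j)ᴴ * diag_q (dim A (j, q)) * u j = r`. Since the `dim A (j, q)` are the parts of the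
partition conjugate to the spectrum of the `j`-th matrix, this yields a Horn triple of conjugate
partitions, and `μ((A^o)^c)` is conjugate to `μ(A)`.
-/

/-! ### Relations between vectors of a family of subspaces -/

section RelMap

variable {𝕜 S P κ : Type*} [Field 𝕜] [AddCommGroup S] [Module 𝕜 S] [Fintype P]

/-- The map `(t p)_p ↦ (∑ p, h p k • t p)_k`. Its kernel consists of the linear relations with
coefficients `h` between vectors of the subspaces `A p`; the annihilator of its range is
`compatHom A h`. -/
def relMap (A : P → Submodule 𝕜 S) (h : P → κ → 𝕜) : (∀ p, A p) →ₗ[𝕜] (κ → S) :=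
  LinearMap.pi fun k => ∑ p, h p k • (A p).subtype ∘ₗ LinearMap.proj p

theorem relMap_apply (A : P → Submodule 𝕜 S) (h : P → κ → 𝕜) (t : ∀ p, A p) (k : κ) :
    relMap A h t k = ∑ p, h p k • (t p : S) := by
  simp [relMap]

end RelMap

section Relations

variable {𝕜 S P κ : Type*} [NontriviallyNormedField 𝕜] [NormedAddCommGroup S] [NormedSpace 𝕜 S]

section CompatHom

variable [Fintype κ]

/-- The linear maps `φ : S → 𝕜^κ` such that, for every `p`, the covector `h p` vanishes on
`φ (A p)`: the homomorphisms compatible with the subspaces `A p` of `S` and the hyperplanes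
`(h p)^⊥` of `𝕜^κ`. -/
def compatHom (A : P → Submodule 𝕜 S) (h : P → κ → 𝕜) : Submodule 𝕜 (S →L[𝕜] (κ → 𝕜)) where
  carrier := {φ | ∀ p, ∀ a ∈ A p, h p ⬝ᵥ φ a = 0}
  add_mem' hφ hψ p a ha := by simp [dotProduct_add, hφ p a ha, hψ p a ha]
  zero_mem' p a _ := by simp
  smul_mem' c φ hφ p a ha := by simp [dotProduct_smul, hφ p a ha]

theorem mem_compatHom {A : P → Submodule 𝕜 S} {h : P → κ → 𝕜} {φ : S →L[𝕜] (κ → 𝕜)} :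
    φ ∈ compatHom A h ↔ ∀ p, ∀ a ∈ A p, h p ⬝ᵥ φ a = 0 := Iff.rfl

theorem mem_compatHom_map {A : P → Submodule 𝕜 S} {g : P → S →L[𝕜] S} {h : P → κ → 𝕜}
    {φ : S →L[𝕜] (κ → 𝕜)} :
    φ ∈ compatHom (fun p => (A p).map (g p : S →ₗ[𝕜] S)) h ↔
      ∀ p, ∀ a ∈ A p, h p ⬝ᵥ φ (g p a) = 0 := by
  simp [mem_compatHom]

variable [CompleteSpace 𝕜] [FiniteDimensional 𝕜 S]

/-- The equations defining the maps compatible with the moved subspaces `g p (A p)`. -/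
noncomputable def compatEqn (A : P → Submodule 𝕜 S) (g : P → S →L[𝕜] S) (h : P → κ → 𝕜) :
    (S →L[𝕜] (κ → 𝕜)) →L[𝕜] (∀ p, A p →L[𝕜] 𝕜) :=
  LinearMap.toContinuousLinearMap
    { toFun φ p := ∑ k, h p k • (ContinuousLinearMap.proj k ∘L φ ∘L g p ∘L (A p).subtypeL)
      map_add' φ ψ := by ext; simp [Finset.sum_add_distrib]
      map_smul' c φ := by ext; simp [Finset.mul_sum, mul_left_comm] }

theorem compatEqn_apply (A : P → Submodule 𝕜 S) (g : P → S →L[𝕜] S) (h : P → κ → 𝕜)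
    (φ : S →L[𝕜] (κ → 𝕜)) (p : P) (a : A p) : compatEqn A g h φ p a = h p ⬝ᵥ φ (g p a) := by
  simp [compatEqn, dotProduct]

theorem ker_compatEqn (A : P → Submodule 𝕜 S) (g : P → S →L[𝕜] S) (h : P → κ → 𝕜) :
    (compatEqn A g h).ker = compatHom (fun p => (A p).map (g p : S →ₗ[𝕜] S)) h := by
  ext φ
  rw [mem_compatHom_map, LinearMap.mem_ker]
  simp [funext_iff, ContinuousLinearMap.ext_iff, compatEqn_apply]

theorem continuous_compatEqn [Finite P] (A : P → Submodule 𝕜 S) :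
    Continuous fun x : (P → S →L[𝕜] S) × (P → κ → 𝕜) => compatEqn A x.1 x.2 := by
  have := Fintype.ofFinite P
  refine (continuous_clm_apply (𝕜 := 𝕜) (E := S →L[𝕜] (κ → 𝕜))
    (F := ∀ p, A p →L[𝕜] 𝕜)).2 fun φ => ?_
  refine continuous_pi fun p => continuous_clm_apply.2 fun a => ?_
  simp only [compatEqn_apply, dotProduct]
  fun_prop

end CompatHom

variable [Fintype P]

theorem sum_apply_relMap [Fintype κ] (A : P → Submodule 𝕜 S) (h : P → κ → 𝕜) (t : ∀ p, A p)
    (φ : S →L[𝕜] (κ → 𝕜)) :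
    ∑ k, φ (relMap A h t k) k = ∑ p, h p ⬝ᵥ φ (t p) := by
  simp only [relMap_apply, map_sum, map_smul, Finset.sum_apply, Pi.smul_apply, smul_eq_mul,
    dotProduct]
  exact Finset.sum_comm

variable [Fintype κ] [CompleteSpace 𝕜] [FiniteDimensional 𝕜 S]

/-- A tuple of linear forms on `S` indexed by `κ`, regarded as a linear form on `κ → S`. -/
noncomputable def homEquivDualPi [DecidableEq κ] : (S →L[𝕜] (κ → 𝕜)) ≃ₗ[𝕜] Dual 𝕜 (κ → S) where
  toFun φ := ∑ k, (LinearMap.proj k ∘ₗ (φ : S →ₗ[𝕜] (κ → 𝕜))) ∘ₗ LinearMap.proj k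
  map_add' φ ψ := by ext; simp [Finset.sum_add_distrib]
  map_smul' c φ := by ext; simp [Finset.mul_sum]
  invFun f := LinearMap.toContinuousLinearMap
    (LinearMap.pi fun k => f ∘ₗ LinearMap.single 𝕜 (fun _ => S) k)
  left_inv φ := by
    ext s k
    simp [Pi.single_apply, apply_ite φ, ite_apply]
  right_inv f := by
    refine LinearMap.pi_ext fun k s => ?_
    simp [LinearMap.sum_apply, ← map_sum, Finset.univ_sum_single]

theorem homEquivDualPi_apply [DecidableEq κ] (φ : S →L[𝕜] (κ → 𝕜)) (x : κ → S) :
    homEquivDualPi φ x = ∑ k, φ (x k) k := by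
  simp [homEquivDualPi, LinearMap.sum_apply]

theorem map_homEquivDualPi_compatHom [DecidableEq κ] (A : P → Submodule 𝕜 S) (h : P → κ → 𝕜) :
    (compatHom A h).map (homEquivDualPi : _ ≃ₗ[𝕜] Dual 𝕜 (κ → S)).toLinearMap =
      (relMap A h).range.dualAnnihilator := by
  classical
  ext f
  obtain ⟨φ, rfl⟩ := homEquivDualPi.surjective f
  suffices φ ∈ compatHom A h ↔ ∀ t : ∀ p, A p, ∑ p, h p ⬝ᵥ φ (t p : S) = 0 by
    simpa [Submodule.mem_dualAnnihilator, homEquivDualPi_apply, sum_apply_relMap] using this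
  refine ⟨fun hφ t => Finset.sum_eq_zero fun p _ => hφ p _ (t p).2, fun hφ p a ha => ?_⟩
  rw [← hφ (Pi.single p ⟨a, ha⟩), Finset.sum_eq_single p _ (by simp)]
  · simp
  · intro b _ hb
    simp [Pi.single_eq_of_ne hb]

theorem finrank_compatHom_add (A : P → Submodule 𝕜 S) (h : P → κ → 𝕜) :
    finrank 𝕜 (compatHom A h) + ∑ p, finrank 𝕜 (A p) =
      Fintype.card κ * finrank 𝕜 S + finrank 𝕜 (relMap A h).ker := by
  classical
  have hdual := Subspace.finrank_add_finrank_dualAnnihilator_eq (relMap A h).range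
  have hrank := LinearMap.finrank_range_add_finrank_ker (relMap A h)
  rw [← map_homEquivDualPi_compatHom, LinearEquiv.finrank_map_eq, finrank_pi_fintype] at hdual
  rw [finrank_pi_fintype] at hrank
  simp only [Finset.sum_const, Finset.card_univ, smul_eq_mul] at hdual
  lia

end Relations

/-! ### Transporting kernels to nearby maps -/

theorem finrank_map_of_injective {R E F : Type*} [Ring R] [AddCommGroup E] [Module R E]
    [AddCommGroup F] [Module R F] {f : E →ₗ[R] F} (hf : Function.Injective f)
    (p : Submodule R E) : finrank R (p.map f) = finrank R p :=
  (LinearEquiv.finrank_eq (Submodule.equivMapOfInjective f hf p)).symm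

section Section

variable {K E F : Type*} [DivisionRing K] [AddCommGroup E] [Module K E] [AddCommGroup F]
  [Module K F]

theorem exists_section_mem (f : E →ₗ[K] F) (p : Submodule K E) :
    ∃ R : F →ₗ[K] E, ∀ v ∈ p, f (R (f v)) = f v ∧ R (f v) ∈ p := by
  obtain ⟨R, hR⟩ := (f.domRestrict p).rangeRestrict.exists_rightInverse_of_surjective
    (LinearMap.range_rangeRestrict _)
  obtain ⟨R', hR'⟩ := LinearMap.exists_extend R
  refine ⟨p.subtype ∘ₗ R', fun v hv => ?_⟩
  have hext : R' (f v) = R ((f.domRestrict p).rangeRestrict ⟨v, hv⟩) := by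
    rw [← hR']
    rfl
  have hright := congrArg Subtype.val
    (LinearMap.congr_fun hR ((f.domRestrict p).rangeRestrict ⟨v, hv⟩))
  simp only [LinearMap.comp_apply, Submodule.subtype_apply, hext]
  exact ⟨hright, Subtype.prop _⟩

theorem exists_section_mem_extending {f : E →ₗ[K] F} {p q : Submodule K E} (hqp : q ≤ p)
    {R : F →ₗ[K] E} (hR : ∀ v ∈ q, f (R (f v)) = f v ∧ R (f v) ∈ q) :
    ∃ R' : F →ₗ[K] E, (∀ v ∈ p, f (R' (f v)) = f v ∧ R' (f v) ∈ p) ∧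
      ∀ v ∈ q, R' (f v) = R (f v) := by
  obtain ⟨R₀, hR₀⟩ := exists_section_mem f p
  obtain ⟨P, hP⟩ := exists_section_mem (q.map f).subtype ⊤
  let π : F →ₗ[K] F := (q.map f).subtype ∘ₗ P
  have hπ : ∀ v ∈ q, π (f v) = f v := fun v hv =>
    (hP ⟨f v, Submodule.mem_map_of_mem hv⟩ trivial).1
  let R' : F →ₗ[K] E := R ∘ₗ π + R₀ ∘ₗ (LinearMap.id - π)
  refine ⟨R', fun v hv => ?_, fun v hv => by simp [R', hπ v hv]⟩
  obtain ⟨u, hu, huv⟩ := Submodule.mem_map.1 (P (f v)).2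
  have hvu := hR₀ (v - u) (p.sub_mem hv (hqp hu))
  have hsum : R' (f v) = R (f u) + R₀ (f (v - u)) := by
    simp [R', π, ← huv]
  refine ⟨?_, hsum ▸ p.add_mem (hqp (hR u hu).2) hvu.2⟩
  rw [hsum, map_add, (hR u hu).1, hvu.1, map_sub, add_sub_cancel]

theorem exists_section_mem_of_antitone {Q : Type*} [LinearOrder Q] [Finite Q]
    {B : Q → Submodule K E} (hB : Antitone B) (f : E →ₗ[K] F) :
    ∃ R : F →ₗ[K] E, (∀ v, f (R (f v)) = f v) ∧ ∀ q, ∀ v ∈ B q, R (f v) ∈ B q := by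
  have := Fintype.ofFinite Q
  suffices h : ∀ (s : Finset Q) (p : Submodule K E), (∀ q ∈ s, B q ≤ p) → ∃ R : F →ₗ[K] E,
      (∀ v ∈ p, f (R (f v)) = f v ∧ R (f v) ∈ p) ∧ ∀ q ∈ s, ∀ v ∈ B q, R (f v) ∈ B q by
    obtain ⟨R, hR, hRB⟩ := h Finset.univ ⊤ fun _ _ => le_top
    exact ⟨R, fun v => (hR v trivial).1, fun q => hRB q (Finset.mem_univ q)⟩
  intro s
  induction s using Finset.induction_on_min with
  | empty =>
    intro p _
    obtain ⟨R, hR⟩ := exists_section_mem f p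
    exact ⟨R, hR, by simp⟩
  | insert a s ha ih =>
    intro p hp
    have hBa : ∀ q ∈ s, B q ≤ B a := fun q hq => hB (ha q hq).le
    obtain ⟨R, hR, hRB⟩ := ih (B a) hBa
    obtain ⟨R', hR', hRR'⟩ := exists_section_mem_extending (hp a (Finset.mem_insert_self a s)) hR
    refine ⟨R', hR', fun q hq v hv => ?_⟩
    obtain rfl | hqs := Finset.mem_insert.1 hq
    · exact hRR' v hv ▸ (hR v hv).2
    · exact hRR' v (hBa q hqs hv) ▸ hRB q hqs v hv

end Section

section KerTransport

variable {𝕜 E F : Type*} [NontriviallyNormedField 𝕜] [NormedAddCommGroup E] [NormedSpace 𝕜 E]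
  [NormedAddCommGroup F] [NormedSpace 𝕜 F]

/-- The endomorphism `(1 + R (L - f))⁻¹` of `E`. When `f R f = f` and `L` is close to `f` it
carries as much of `ker f` into `ker L` as dimensions allow, see `map_kerTransport`; where
`1 + R (L - f)` is not invertible it is the junk value `0`. -/
noncomputable def kerTransport (f : E →L[𝕜] F) (R : F →L[𝕜] E) (L : E →L[𝕜] F) : E →L[𝕜] E :=
  Ring.inverse (1 + R ∘L (L - f))

variable {f L : E →L[𝕜] F} {R : F →L[𝕜] E}

theorem kerTransport_self : kerTransport f R f = 1 := by
  simp [kerTransport]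

theorem kerTransport_apply_of_isUnit (hL : IsUnit (1 + R ∘L (L - f))) (v : E) :
    kerTransport f R L ((1 + R ∘L (L - f)) v) = v :=
  DFunLike.congr_fun (Ring.inverse_mul_cancel _ hL) v

theorem injective_kerTransport (hL : IsUnit (1 + R ∘L (L - f))) :
    Function.Injective (kerTransport f R L) :=
  Function.LeftInverse.injective (g := (1 + R ∘L (L - f) : E →L[𝕜] E)) fun v =>
    DFunLike.congr_fun (Ring.mul_inverse_cancel _ hL) v

theorem eventually_isUnit_one_add_comp_sub [CompleteSpace E] (f : E →L[𝕜] F) (R : F →L[𝕜] E) :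
    ∀ᶠ L in 𝓝 f, IsUnit (1 + R ∘L (L - f)) := by
  have hcont : Continuous fun L : E →L[𝕜] F => 1 + R ∘L (L - f) := by fun_prop
  exact hcont.continuousAt.eventually (Units.isOpen.mem_nhds (by simp))

theorem continuousAt_kerTransport [CompleteSpace E] (f : E →L[𝕜] F) (R : F →L[𝕜] E) :
    ContinuousAt (kerTransport f R) f := by
  have hcont : Continuous fun L : E →L[𝕜] F => 1 + R ∘L (L - f) := by fun_prop
  refine ContinuousAt.comp (g := Ring.inverse) ?_ hcont.continuousAt
  simpa using NormedRing.inverse_continuousAt (1 : (E →L[𝕜] E)ˣ)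

variable {U : Submodule 𝕜 E}

theorem map_inf_ker_le (hR : ∀ v, f (R (f v)) = f v) (hU : ∀ v ∈ U, R (f v) ∈ U) :
    (U ⊓ L.ker).map ((1 + R ∘L (L - f) : E →L[𝕜] E) : E →ₗ[𝕜] E) ≤ U ⊓ f.ker := by
  rintro _ ⟨v, ⟨hvU, hvL⟩, rfl⟩
  have hv : (1 + R ∘L (L - f)) v = v - R (f v) := by
    have : L v = 0 := hvL
    simp [this, sub_eq_add_neg]
  rw [ContinuousLinearMap.coe_coe, hv]
  exact ⟨U.sub_mem hvU (hU v hvU), by simp [hR]⟩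

theorem finrank_map_inf_ker (hL : IsUnit (1 + R ∘L (L - f))) :
    finrank 𝕜 ((U ⊓ L.ker).map ((1 + R ∘L (L - f) : E →L[𝕜] E) : E →ₗ[𝕜] E)) =
      finrank 𝕜 (U ⊓ L.ker : Submodule 𝕜 E) :=
  finrank_map_of_injective (Function.LeftInverse.injective (kerTransport_apply_of_isUnit hL)) _

variable [FiniteDimensional 𝕜 E]

theorem finrank_inf_ker_le (hR : ∀ v, f (R (f v)) = f v) (hU : ∀ v ∈ U, R (f v) ∈ U)
    (hL : IsUnit (1 + R ∘L (L - f))) :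
    finrank 𝕜 (U ⊓ L.ker : Submodule 𝕜 E) ≤ finrank 𝕜 (U ⊓ f.ker : Submodule 𝕜 E) :=
  finrank_map_inf_ker hL ▸ Submodule.finrank_mono (map_inf_ker_le hR hU)

theorem map_kerTransport (hR : ∀ v, f (R (f v)) = f v) (hU : ∀ v ∈ U, R (f v) ∈ U)
    (hL : IsUnit (1 + R ∘L (L - f)))
    (hle : finrank 𝕜 (U ⊓ f.ker : Submodule 𝕜 E) ≤ finrank 𝕜 (U ⊓ L.ker : Submodule 𝕜 E)) :
    (U ⊓ f.ker).map (kerTransport f R L : E →ₗ[𝕜] E) = U ⊓ L.ker := by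
  have hinv : (kerTransport f R L : E →ₗ[𝕜] E) ∘ₗ
      ((1 + R ∘L (L - f) : E →L[𝕜] E) : E →ₗ[𝕜] E) = LinearMap.id :=
    LinearMap.ext (kerTransport_apply_of_isUnit hL)
  rw [← Submodule.eq_of_le_of_finrank_le (map_inf_ker_le hR hU)
    (hle.trans (finrank_map_inf_ker hL).ge), ← Submodule.map_comp, hinv, Submodule.map_id]

theorem finrank_ker_le (hR : ∀ v, f (R (f v)) = f v) (hL : IsUnit (1 + R ∘L (L - f))) :
    finrank 𝕜 L.ker ≤ finrank 𝕜 f.ker := by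
  have hle := finrank_inf_ker_le (U := ⊤) hR (fun _ _ => trivial) hL
  rwa [top_inf_eq, top_inf_eq] at hle

theorem map_ker_kerTransport (hR : ∀ v, f (R (f v)) = f v) (hL : IsUnit (1 + R ∘L (L - f)))
    (hle : finrank 𝕜 f.ker ≤ finrank 𝕜 L.ker) :
    f.ker.map (kerTransport f R L : E →ₗ[𝕜] E) = L.ker := by
  have hmap := map_kerTransport (U := ⊤) hR (fun _ _ => trivial) hL
    (by rwa [top_inf_eq, top_inf_eq])
  rwa [top_inf_eq, top_inf_eq] at hmap

end KerTransport

section Semicontinuity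

variable {𝕜 S P κ : Type*} [NontriviallyNormedField 𝕜] [CompleteSpace 𝕜] [NormedAddCommGroup S]
  [NormedSpace 𝕜 S] [FiniteDimensional 𝕜 S] [Fintype κ]

theorem exists_continuousLinearMap_section {E F : Type*} [NormedAddCommGroup E] [NormedSpace 𝕜 E]
    [NormedAddCommGroup F] [NormedSpace 𝕜 F] [FiniteDimensional 𝕜 F] (f : E →L[𝕜] F) :
    ∃ R : F →L[𝕜] E, ∀ v, f (R (f v)) = f v := by
  obtain ⟨R, hR⟩ := exists_section_mem (f : E →ₗ[𝕜] F) ⊤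
  exact ⟨LinearMap.toContinuousLinearMap R, fun v => (hR v trivial).1⟩

theorem ker_compatEqn_one (A : P → Submodule 𝕜 S) (h : P → κ → 𝕜) :
    (compatEqn A 1 h).ker = compatHom A h := by
  rw [ker_compatEqn]
  congr! with p
  exact Submodule.map_id _

theorem eventually_finrank_compatHom_map_le [Finite P] (A : P → Submodule 𝕜 S) (h₀ : P → κ → 𝕜) :
    ∀ᶠ x : (P → S →L[𝕜] S) × (P → κ → 𝕜) in 𝓝 (1, h₀),
      finrank 𝕜 (compatHom (fun p => (A p).map (x.1 p : S →ₗ[𝕜] S)) x.2) ≤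
        finrank 𝕜 (compatHom A h₀) := by
  have := Fintype.ofFinite P
  have := FiniteDimensional.complete 𝕜 (S →L[𝕜] (κ → 𝕜))
  obtain ⟨R, hR⟩ := exists_continuousLinearMap_section (𝕜 := 𝕜)
    (E := S →L[𝕜] (κ → 𝕜)) (F := ∀ p, A p →L[𝕜] 𝕜) (compatEqn A 1 h₀)
  filter_upwards [(continuous_compatEqn (κ := κ) A).continuousAt.eventually
    (eventually_isUnit_one_add_comp_sub _ R)] with x hx
  have hle := finrank_ker_le hR hx
  rwa [← ker_compatEqn, ← ker_compatEqn_one]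

theorem exists_compatHom_section [Finite P] {A : P → Submodule 𝕜 S} {h₀ : P → κ → 𝕜}
    (hmin : ∀ᶠ h in 𝓝 h₀, finrank 𝕜 (compatHom A h₀) ≤ finrank 𝕜 (compatHom A h))
    {φ : S →L[𝕜] (κ → 𝕜)} (hφ : φ ∈ compatHom A h₀) :
    ∃ s : (P → κ → 𝕜) → S →L[𝕜] (κ → 𝕜),
      ContinuousAt s h₀ ∧ s h₀ = φ ∧ ∀ᶠ h in 𝓝 h₀, s h ∈ compatHom A h := by
  have := Fintype.ofFinite P
  have := FiniteDimensional.complete 𝕜 (S →L[𝕜] (κ → 𝕜))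
  obtain ⟨R, hR⟩ := exists_continuousLinearMap_section (𝕜 := 𝕜)
    (E := S →L[𝕜] (κ → 𝕜)) (F := ∀ p, A p →L[𝕜] 𝕜) (compatEqn A 1 h₀)
  have hcont : Continuous fun h : P → κ → 𝕜 => compatEqn A 1 h :=
    (continuous_compatEqn A).comp (Continuous.prodMk_right 1)
  refine ⟨fun h => kerTransport (compatEqn A 1 h₀) R (compatEqn A 1 h) φ, ?_, ?_, ?_⟩
  · exact ((continuousAt_kerTransport _ R).comp hcont.continuousAt).clm_apply continuousAt_const
  · simp [kerTransport_self]
  · filter_upwards [hmin, hcont.continuousAt.eventually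
      (eventually_isUnit_one_add_comp_sub _ R)] with h hle hunit
    rw [← ker_compatEqn_one, ← ker_compatEqn_one] at hle
    rw [← ker_compatEqn_one] at hφ ⊢
    exact (map_ker_kerTransport hR hunit hle).le (Submodule.mem_map_of_mem hφ)

/-- Differentiating `∑ p, h p ⬝ᵥ φ (t p) = 0` along `h₀ + z • D` leaves `∑ p, D p ⬝ᵥ φ (t p)`,
because `φ` deforms to compatible maps and `t` pairs to zero with `h₀`. -/
theorem apply_eq_zero_of_relMap_eq_zero [Fintype P] {A : P → Submodule 𝕜 S} {h₀ : P → κ → 𝕜}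
    (hmin : ∀ᶠ h in 𝓝 h₀, finrank 𝕜 (compatHom A h₀) ≤ finrank 𝕜 (compatHom A h))
    {φ : S →L[𝕜] (κ → 𝕜)} (hφ : φ ∈ compatHom A h₀) {t : ∀ p, A p} (ht : relMap A h₀ t = 0)
    (p : P) : φ (t p) = 0 := by
  classical
  obtain ⟨s, hs, hsφ, hmem⟩ := exists_compatHom_section hmin hφ
  suffices hD : ∀ D : P → κ → 𝕜, ∑ p, D p ⬝ᵥ φ (t p) = 0 by
    ext k
    have := hD (Pi.single p (Pi.single k 1))
    rw [Finset.sum_eq_single p (fun q _ hqp => by simp [Pi.single_eq_of_ne hqp]) (by simp)] at this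
    simpa using this
  intro D
  have hline : Tendsto (fun z : 𝕜 => h₀ + z • D) (𝓝[≠] 0) (𝓝 h₀) := by
    have : Continuous fun z : 𝕜 => h₀ + z • D := by fun_prop
    simpa using (this.tendsto 0).mono_left nhdsWithin_le_nhds
  have hlim : Tendsto (fun z : 𝕜 => ∑ p, D p ⬝ᵥ s (h₀ + z • D) (t p)) (𝓝[≠] 0)
      (𝓝 (∑ p, D p ⬝ᵥ φ (t p))) := by
    have hcont : Continuous fun ψ : S →L[𝕜] (κ → 𝕜) => ∑ p, D p ⬝ᵥ ψ (t p) := by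
      simp only [dotProduct]
      fun_prop
    exact (hcont.tendsto φ).comp ((hsφ ▸ hs.tendsto).comp hline)
  refine tendsto_nhds_unique hlim (tendsto_const_nhds.congr' ?_)
  filter_upwards [hline.eventually hmem, self_mem_nhdsWithin] with z hz hz0
  have hsum : ∑ p, (h₀ p + z • D p) ⬝ᵥ s (h₀ + z • D) (t p) = 0 :=
    Finset.sum_eq_zero fun p _ => hz p _ (t p).2
  have hsum₀ : ∑ p, h₀ p ⬝ᵥ s (h₀ + z • D) (t p) = 0 := by
    simp [← sum_apply_relMap, ht]
  simp only [add_dotProduct, smul_dotProduct, Finset.sum_add_distrib, hsum₀, zero_add,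
    smul_eq_mul] at hsum
  rw [← Finset.mul_sum] at hsum
  exact ((mul_eq_zero.1 hsum).resolve_left hz0).symm

end Semicontinuity

section KerMove

variable {𝕜 E F : Type*} [NontriviallyNormedField 𝕜] [NormedAddCommGroup E] [NormedSpace 𝕜 E]
  [NormedAddCommGroup F] [NormedSpace 𝕜 F]

/-- The perturbation of the identity of `E` which preserves `L` and carries
`kerTransport f R L v` to `kerTransport f R' L (k v)` for `v ∈ ker f`; here `π` is a retraction of
`E` onto `ker f`. It turns a motion `k` of a subspace of `ker f` into a motion of a subspace of
`E`, see `map_map_kerTransport_eq`. -/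
noncomputable def kerMove (f : E →L[𝕜] F) (R R' : F →L[𝕜] E) (π : E →L[𝕜] f.ker)
    (x : (f.ker →L[𝕜] f.ker) × (E →L[𝕜] F)) : E →L[𝕜] E :=
  1 + ((kerTransport f R' x.2 ∘L f.ker.subtypeL ∘L x.1 -
    kerTransport f R x.2 ∘L f.ker.subtypeL) ∘L π) ∘L (1 + R ∘L (x.2 - f))

variable {f : E →L[𝕜] F} {R R' : F →L[𝕜] E} {π : E →L[𝕜] f.ker}
  {x : (f.ker →L[𝕜] f.ker) × (E →L[𝕜] F)}

theorem tendsto_kerMove [CompleteSpace E] (f : E →L[𝕜] F) (R R' : F →L[𝕜] E)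
    (π : E →L[𝕜] f.ker) : Tendsto (kerMove f R R' π) (𝓝 (1, f)) (𝓝 1) := by
  have hT (R : F →L[𝕜] E) : ContinuousAt
      (fun x : (f.ker →L[𝕜] f.ker) × (E →L[𝕜] F) => kerTransport f R x.2) (1, f) :=
    ContinuousAt.comp (g := kerTransport f R) (continuousAt_kerTransport f R) continuousAt_snd
  have hcont : ContinuousAt (kerMove f R R' π) (1, f) := by
    refine continuousAt_const.add (ContinuousAt.clm_comp (ContinuousAt.clm_comp (.sub
      ((hT R').clm_comp (continuousAt_const.clm_comp continuousAt_fst))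
      ((hT R).clm_comp continuousAt_const)) continuousAt_const) ?_)
    fun_prop
  have hone : kerMove f R R' π (1, f) = 1 := by
    simp [kerMove, kerTransport_self, ContinuousLinearMap.one_def]
  exact hone ▸ hcont.tendsto

theorem kerMove_kerTransport (hπ : ∀ v : f.ker, π v = v) (hunit : IsUnit (1 + R ∘L (x.2 - f)))
    (v : f.ker) :
    kerMove f R R' π x (kerTransport f R x.2 v) = kerTransport f R' x.2 (x.1 v) := by
  have hinv : (1 + R ∘L (x.2 - f)) (kerTransport f R x.2 v) = v :=
    DFunLike.congr_fun (Ring.mul_inverse_cancel _ hunit) (v : E)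
  rw [kerMove, _root_.add_apply, ContinuousLinearMap.comp_apply (_ ∘L π), hinv]
  simp [hπ]

theorem apply_kerMove (hR : f.ker.map (kerTransport f R x.2 : E →ₗ[𝕜] E) ≤ x.2.ker)
    (hR' : f.ker.map (kerTransport f R' x.2 : E →ₗ[𝕜] E) ≤ x.2.ker) (v : E) :
    x.2 (kerMove f R R' π x v) = x.2 v := by
  have hT (w : f.ker) : x.2 (kerTransport f R x.2 w) = 0 := hR ⟨w, w.2, rfl⟩
  have hT' (w : f.ker) : x.2 (kerTransport f R' x.2 w) = 0 := hR' ⟨w, w.2, rfl⟩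
  simp only [kerMove, _root_.add_apply, ContinuousLinearMap.comp_apply,
    _root_.sub_apply, map_add, map_sub, Submodule.subtypeL_apply, hT, hT', sub_zero,
    add_zero, one_apply_eq_self]

theorem map_map_kerTransport_eq {U : Submodule 𝕜 E} (hπ : ∀ v : f.ker, π v = v)
    (hunit : IsUnit (1 + R ∘L (x.2 - f)))
    (hmove : ∀ v, x.2 (kerMove f R R' π x v) = x.2 v)
    (hU : (U ⊓ f.ker).map (kerTransport f R x.2 : E →ₗ[𝕜] E) = U ⊓ x.2.ker) :
    ((U.comap f.ker.subtype).map (x.1 : f.ker →ₗ[𝕜] f.ker)).map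
        ((kerTransport f R' x.2 : E →ₗ[𝕜] E) ∘ₗ f.ker.subtype) =
      U.map (kerMove f R R' π x : E →ₗ[𝕜] E) ⊓ x.2.ker := by
  have hinf : (U ⊓ x.2.ker).map (kerMove f R R' π x : E →ₗ[𝕜] E) =
      U.map (kerMove f R R' π x : E →ₗ[𝕜] E) ⊓ x.2.ker := by
    ext w
    simp only [Submodule.mem_map, Submodule.mem_inf, LinearMap.mem_ker]
    refine ⟨?_, ?_⟩
    · rintro ⟨v, ⟨hvU, hv⟩, rfl⟩
      exact ⟨⟨v, hvU, rfl⟩, (hmove v).trans hv⟩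
    · rintro ⟨⟨v, hvU, rfl⟩, hv⟩
      exact ⟨v, ⟨hvU, (hmove v).symm.trans hv⟩, rfl⟩
  have hcomp : ((kerTransport f R' x.2 : E →ₗ[𝕜] E) ∘ₗ f.ker.subtype) ∘ₗ
      (x.1 : f.ker →ₗ[𝕜] f.ker) = (kerMove f R R' π x : E →ₗ[𝕜] E) ∘ₗ
        (kerTransport f R x.2 : E →ₗ[𝕜] E) ∘ₗ f.ker.subtype :=
    LinearMap.ext fun v => (kerMove_kerTransport hπ hunit v).symm
  rw [← Submodule.map_comp, hcomp, Submodule.map_comp, Submodule.map_comp,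
    Submodule.map_comap_subtype, inf_comm, hU, hinf]

end KerMove

/-! ### Moving several flags independently -/

section Flags

variable {𝕜 S ι Q : Type*} [NontriviallyNormedField 𝕜] [NormedAddCommGroup S] [NormedSpace 𝕜 S]

/-- The family of flags `A (j, ·)` of `S`, indexed by `j`, with the `j`-th flag moved by the
endomorphism `g j`. -/
def moveFlags (A : ι × Q → Submodule 𝕜 S) (g : ι → S →L[𝕜] S) : ι × Q → Submodule 𝕜 S :=
  fun p => (A p).map (g p.1 : S →ₗ[𝕜] S)

theorem moveFlags_one (A : ι × Q → Submodule 𝕜 S) : moveFlags A 1 = A :=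
  funext fun _ => Submodule.map_id _

theorem moveFlags_moveFlags (A : ι × Q → Submodule 𝕜 S) (g g' : ι → S →L[𝕜] S) :
    moveFlags (moveFlags A g) g' = moveFlags A (g' * g) :=
  funext fun p => (Submodule.map_comp (g p.1 : S →ₗ[𝕜] S) (g' p.1 : S →ₗ[𝕜] S) (A p)).symm

theorem antitone_moveFlags [Preorder Q] {A : ι × Q → Submodule 𝕜 S}
    (hA : ∀ j, Antitone fun q => A (j, q)) (g : ι → S →L[𝕜] S) (j : ι) :
    Antitone fun q => moveFlags A g (j, q) :=
  fun _ _ hq => Submodule.map_mono (hA j hq)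

variable {F : Type*} [NormedAddCommGroup F] [NormedSpace 𝕜 F] [Fintype ι] [Fintype Q]

/-- The total dimension of the kernel of `φ` and of its intersections with the subspaces `A p`. -/
noncomputable def kerDim (A : ι × Q → Submodule 𝕜 S) (φ : S →L[𝕜] F) : ℕ :=
  ∑ p, finrank 𝕜 (A p ⊓ φ.ker : Submodule 𝕜 S) + finrank 𝕜 φ.ker

theorem finrank_le_of_kerDim_le {A : ι × Q → Submodule 𝕜 S} {φ ψ : S →L[𝕜] F}
    (h : ∀ p, finrank 𝕜 (A p ⊓ ψ.ker : Submodule 𝕜 S) ≤ finrank 𝕜 (A p ⊓ φ.ker : Submodule 𝕜 S))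
    (hker : finrank 𝕜 ψ.ker ≤ finrank 𝕜 φ.ker) (hle : kerDim A φ ≤ kerDim A ψ) :
    (∀ p, finrank 𝕜 (A p ⊓ φ.ker : Submodule 𝕜 S) ≤ finrank 𝕜 (A p ⊓ ψ.ker : Submodule 𝕜 S)) ∧
      finrank 𝕜 φ.ker ≤ finrank 𝕜 ψ.ker := by
  have hsum := Finset.sum_le_sum fun p (_ : p ∈ Finset.univ) => h p
  unfold kerDim at hle
  refine ⟨fun p => ?_, by lia⟩
  exact ((Finset.sum_eq_sum_iff_of_le fun p _ => h p).1 (by lia) p (Finset.mem_univ p)).ge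

variable [CompleteSpace 𝕜] [FiniteDimensional 𝕜 S] [FiniteDimensional 𝕜 F] [LinearOrder Q]

theorem exists_flag_transport {B : ι × Q → Submodule 𝕜 S} (hB : ∀ j, Antitone fun q => B (j, q))
    (φ₀ : S →L[𝕜] F) :
    ∃ G : (ι → φ₀.ker →L[𝕜] φ₀.ker) × (S →L[𝕜] F) → ι → S →L[𝕜] S,
      Tendsto G (𝓝 (1, φ₀)) (𝓝 1) ∧ ∀ᶠ x in 𝓝 (1, φ₀), kerDim B φ₀ ≤ kerDim B x.2 →
        (∀ j v, x.2 (G x j v) = x.2 v) ∧ ∃ σ : φ₀.ker →ₗ[𝕜] S, Function.Injective σ ∧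
          ∀ p, (moveFlags (fun p => (B p).comap φ₀.ker.subtype) x.1 p).map σ =
            moveFlags B (G x) p ⊓ x.2.ker := by
  have := FiniteDimensional.complete 𝕜 S
  have hsection (j : ι) : ∃ R : F →L[𝕜] S, (∀ v, φ₀ (R (φ₀ v)) = φ₀ v) ∧
      ∀ q, ∀ v ∈ B (j, q), R (φ₀ v) ∈ B (j, q) := by
    obtain ⟨R, hR⟩ := exists_section_mem_of_antitone (hB j) (φ₀ : S →ₗ[𝕜] F)
    exact ⟨LinearMap.toContinuousLinearMap R, hR⟩
  choose R hR hRB using hsection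
  obtain ⟨R', hR'⟩ := exists_continuousLinearMap_section φ₀
  obtain ⟨π, hπ⟩ := φ₀.ker.subtype.exists_leftInverse_of_injective φ₀.ker.ker_subtype
  refine ⟨fun x j => kerMove φ₀ (R j) R' (LinearMap.toContinuousLinearMap π) (x.1 j, x.2),
    tendsto_pi_nhds.2 fun j => (tendsto_kerMove φ₀ (R j) R' _).comp ?_, ?_⟩
  · exact Continuous.tendsto' (by fun_prop) _ _ rfl
  have hunits := eventually_all.2 fun j => eventually_isUnit_one_add_comp_sub φ₀ (R j)
  filter_upwards [continuousAt_snd.eventually hunits,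
    continuousAt_snd.eventually (eventually_isUnit_one_add_comp_sub φ₀ R')] with x hunit hunit' hdim
  obtain ⟨hdims, hker⟩ := finrank_le_of_kerDim_le
    (fun p => finrank_inf_ker_le (hR p.1) (hRB p.1 p.2) (hunit p.1))
    (finrank_ker_le hR' hunit') hdim
  have hmove (j : ι) := apply_kerMove (x := (x.1 j, x.2)) (π := LinearMap.toContinuousLinearMap π)
    (map_ker_kerTransport (hR j) (hunit j) hker).le (map_ker_kerTransport hR' hunit' hker).le
  refine ⟨hmove, (kerTransport φ₀ R' x.2 : S →ₗ[𝕜] S) ∘ₗ φ₀.ker.subtype,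
    (injective_kerTransport hunit').comp φ₀.ker.subtype_injective, fun p => ?_⟩
  exact map_map_kerTransport_eq (x := (x.1 p.1, x.2)) (LinearMap.congr_fun hπ) (hunit p.1)
    (hmove p.1) (map_kerTransport (hR p.1) (hRB p.1 p.2) (hunit p.1) (hdims p))

end Flags

section Schofield

variable {𝕜 S ι Q κ : Type*} [NontriviallyNormedField 𝕜] [NormedAddCommGroup S] [NormedSpace 𝕜 S]
  [Fintype ι] [Fintype Q] [Fintype κ]

theorem exists_minimal_compatHom {A : ι × Q → Submodule 𝕜 S}
    {O : Set ((ι → S →L[𝕜] S) × (ι × Q → κ → 𝕜))} (hO : O.Nonempty)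
    (hA : ∀ x ∈ O, compatHom (moveFlags A x.1) x.2 ≠ ⊥) :
    ∃ x ∈ O, ∃ φ ∈ compatHom (moveFlags A x.1) x.2, φ ≠ 0 ∧
      (∀ y ∈ O, finrank 𝕜 (compatHom (moveFlags A x.1) x.2) ≤
        finrank 𝕜 (compatHom (moveFlags A y.1) y.2)) ∧
      ∀ y ∈ O, finrank 𝕜 (compatHom (moveFlags A y.1) y.2) ≤
          finrank 𝕜 (compatHom (moveFlags A x.1) x.2) →
        ∀ ψ ∈ compatHom (moveFlags A y.1) y.2, ψ ≠ 0 →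
          kerDim (moveFlags A x.1) φ ≤ kerDim (moveFlags A y.1) ψ := by
  obtain ⟨z, hz, hzmin⟩ := exists_minimalFor_of_wellFoundedLT (· ∈ O)
    (fun x => finrank 𝕜 (compatHom (moveFlags A x.1) x.2)) hO
  obtain ⟨φ, hφ, hφ0⟩ := (Submodule.ne_bot_iff _).1 (hA z hz)
  obtain ⟨⟨x, ψ⟩, ⟨hx, hψ, hψ0, hxz⟩, hxmin⟩ := exists_minimalFor_of_wellFoundedLT
    (fun y : ((ι → S →L[𝕜] S) × (ι × Q → κ → 𝕜)) × (S →L[𝕜] (κ → 𝕜)) =>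
      y.1 ∈ O ∧ y.2 ∈ compatHom (moveFlags A y.1.1) y.1.2 ∧ y.2 ≠ 0 ∧
        finrank 𝕜 (compatHom (moveFlags A y.1.1) y.1.2) ≤
          finrank 𝕜 (compatHom (moveFlags A z.1) z.2))
    (fun y => kerDim (moveFlags A y.1.1) y.2) ⟨(z, φ), hz, hφ, hφ0, le_rfl⟩
  have hmin {y} (hy : y ∈ O) : finrank 𝕜 (compatHom (moveFlags A z.1) z.2) ≤
      finrank 𝕜 (compatHom (moveFlags A y.1) y.2) :=
    (le_total _ _).elim id (hzmin hy)
  refine ⟨x, hx, ψ, hψ, hψ0, fun y hy => hxz.trans (hmin hy), fun y hy hyx χ hχ hχ0 => ?_⟩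
  exact (le_total _ _).elim id (hxmin (j := (y, χ)) ⟨hy, hχ, hχ0, hyx.trans hxz⟩)

variable [CompleteSpace 𝕜] [FiniteDimensional 𝕜 S]

theorem injective_relMap_of_map_eq_inf_ker {P E : Type*} [Fintype P] [NormedAddCommGroup E]
    [NormedSpace 𝕜 E] {A : P → Submodule 𝕜 S} {B : P → Submodule 𝕜 E} {h : P → κ → 𝕜}
    (hmin : ∀ᶠ h' in 𝓝 h, finrank 𝕜 (compatHom A h) ≤ finrank 𝕜 (compatHom A h'))
    {φ : S →L[𝕜] (κ → 𝕜)} (hφ : φ ∈ compatHom A h) {σ : E →ₗ[𝕜] S} (hσ : Function.Injective σ)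
    (hσker : ∀ p, (B p).map σ = A p ⊓ φ.ker) (hinj : Function.Injective (relMap B h)) :
    Function.Injective (relMap A h) := by
  refine (injective_iff_map_eq_zero _).2 fun t ht => ?_
  have hmem (p : P) : (t p : S) ∈ (B p).map σ :=
    hσker p ▸ ⟨(t p).2, apply_eq_zero_of_relMap_eq_zero hmin hφ ht p⟩
  choose b hb hbt using hmem
  have hzero : relMap B h (fun p => ⟨b p, hb p⟩) = 0 := by
    ext k
    refine hσ ?_
    have htk := congrFun ht k
    rw [relMap_apply] at htk
    simpa [relMap_apply, hbt] using htk
  have hb0 := (injective_iff_map_eq_zero _).1 hinj _ hzero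
  ext p
  have hp : b p = 0 := congrArg Subtype.val (congrFun hb0 p)
  simp [← hbt, hp]

theorem eventually_finrank_compatHom_moveFlags_le {ι Q : Type*} [Finite ι] [Finite Q]
    (A : ι × Q → Submodule 𝕜 S) (h₀ : ι × Q → κ → 𝕜) :
    ∀ᶠ x : (ι → S →L[𝕜] S) × (ι × Q → κ → 𝕜) in 𝓝 (1, h₀),
      finrank 𝕜 (compatHom (moveFlags A x.1) x.2) ≤ finrank 𝕜 (compatHom A h₀) := by
  have hcont : Continuous fun x : (ι → S →L[𝕜] S) × (ι × Q → κ → 𝕜) =>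
      ((fun p => x.1 p.1 : ι × Q → S →L[𝕜] S), x.2) := by fun_prop
  exact (hcont.tendsto' _ (1, h₀) rfl).eventually (eventually_finrank_compatHom_map_le A h₀)

theorem exists_locally_minimal_compatHom {A : ι × Q → Submodule 𝕜 S}
    {O : Set ((ι → S →L[𝕜] S) × (ι × Q → κ → 𝕜))} (hO : IsOpen O) (hne : O.Nonempty)
    (hA : ∀ x ∈ O, compatHom (moveFlags A x.1) x.2 ≠ ⊥) :
    ∃ g h, (g, h) ∈ O ∧ ∃ φ ∈ compatHom (moveFlags A g) h, φ ≠ 0 ∧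
      (∀ y ∈ O, finrank 𝕜 (compatHom (moveFlags A g) h) ≤
        finrank 𝕜 (compatHom (moveFlags A y.1) y.2)) ∧
      ∀ᶠ y in 𝓝 (h, φ), y.2 ∈ compatHom (moveFlags A g) y.1 →
        kerDim (moveFlags A g) φ ≤ kerDim (moveFlags A g) y.2 := by
  obtain ⟨⟨g, h⟩, hgh, φ, hφ, hφ0, hmin, hker⟩ := exists_minimal_compatHom hne hA
  refine ⟨g, h, hgh, φ, hφ, hφ0, hmin, ?_⟩
  have hO' : ∀ᶠ h' in 𝓝 h, (g, h') ∈ O :=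
    (Continuous.prodMk_right g).continuousAt.eventually (hO.mem_nhds hgh)
  have hle : ∀ᶠ h' in 𝓝 h, finrank 𝕜 (compatHom (moveFlags A g) h') ≤
      finrank 𝕜 (compatHom (moveFlags A g) h) := by
    filter_upwards [(Continuous.prodMk_right 1).continuousAt.eventually
      (eventually_finrank_compatHom_moveFlags_le (moveFlags A g) h)] with h' hh'
    rwa [moveFlags_one] at hh'
  filter_upwards [continuousAt_fst.eventually (hO'.and hle), continuousAt_snd.eventually_ne hφ0]
    with y ⟨hyO, hyle⟩ hy0 hy
  exact hker (g, y.1) hyO hyle y.2 hy hy0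

theorem mul_finrank_lt_of_compatHom_eq_bot {P : Type*} [Fintype P] {A : P → Submodule 𝕜 S}
    {h : P → κ → 𝕜} (hA : compatHom A h = ⊥) (hinj : ¬ Function.Injective (relMap A h)) :
    Fintype.card κ * finrank 𝕜 S < ∑ p, finrank 𝕜 (A p) := by
  have hdim := finrank_compatHom_add A h
  rw [hA, finrank_bot, zero_add] at hdim
  rw [hdim]
  have hker : (relMap A h).ker ≠ ⊥ := fun hbot => hinj (LinearMap.ker_eq_bot.1 hbot)
  have := Submodule.one_le_finrank_iff.2 hker
  lia

variable [LinearOrder Q]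

theorem exists_compatHom_transport {B : ι × Q → Submodule 𝕜 S}
    (hB : ∀ j, Antitone fun q => B (j, q)) {h₁ : ι × Q → κ → 𝕜}
    (hmin : ∀ᶠ h in 𝓝 h₁, finrank 𝕜 (compatHom B h₁) ≤ finrank 𝕜 (compatHom B h))
    {φ₀ : S →L[𝕜] (κ → 𝕜)} (hφ₀ : φ₀ ∈ compatHom B h₁)
    (hker : ∀ᶠ y in 𝓝 (h₁, φ₀), y.2 ∈ compatHom B y.1 → kerDim B φ₀ ≤ kerDim B y.2) :
    ∃ G : (ι → φ₀.ker →L[𝕜] φ₀.ker) × (ι × Q → κ → 𝕜) → ι → S →L[𝕜] S,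
      Tendsto G (𝓝 (1, h₁)) (𝓝 1) ∧ ∀ᶠ x in 𝓝 (1, h₁),
        ∃ φ ∈ compatHom (moveFlags B (G x)) x.2, ∃ σ : φ₀.ker →ₗ[𝕜] S, Function.Injective σ ∧
          ∀ p, (moveFlags (fun p => (B p).comap φ₀.ker.subtype) x.1 p).map σ =
            moveFlags B (G x) p ⊓ φ.ker := by
  obtain ⟨G, hG, hGker⟩ := exists_flag_transport hB φ₀
  obtain ⟨s, hs, hsφ, hmem⟩ := exists_compatHom_section hmin hφ₀
  have hs' : Tendsto (fun x : (ι → φ₀.ker →L[𝕜] φ₀.ker) × (ι × Q → κ → 𝕜) => s x.2)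
      (𝓝 (1, h₁)) (𝓝 φ₀) := (hsφ ▸ hs.tendsto).comp continuousAt_snd
  have hGs := continuousAt_fst.tendsto.prodMk_nhds hs'
  refine ⟨fun x => G (x.1, s x.2), hG.comp hGs, ?_⟩
  filter_upwards [hGs.eventually hGker, continuousAt_snd.eventually hmem,
    (continuousAt_snd.tendsto.prodMk_nhds hs').eventually hker] with x hx hsx hle
  obtain ⟨hinv, σ, hσ, hσker⟩ := hx (hle hsx)
  refine ⟨s x.2, mem_compatHom_map.2 fun p a ha => ?_, σ, hσ, hσker⟩
  rw [hinv]
  exact hsx p a ha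

theorem eventually_exists_descent {B : ι × Q → Submodule 𝕜 S}
    (hB : ∀ j, Antitone fun q => B (j, q)) {O : Set ((ι → S →L[𝕜] S) × (ι × Q → κ → 𝕜))}
    (hO : IsOpen O) {h₁ : ι × Q → κ → 𝕜} (h₁O : (1, h₁) ∈ O)
    (hmin : ∀ x ∈ O, finrank 𝕜 (compatHom B h₁) ≤ finrank 𝕜 (compatHom (moveFlags B x.1) x.2))
    {φ₀ : S →L[𝕜] (κ → 𝕜)} (hφ₀ : φ₀ ∈ compatHom B h₁)
    (hker : ∀ᶠ y in 𝓝 (h₁, φ₀), y.2 ∈ compatHom B y.1 → kerDim B φ₀ ≤ kerDim B y.2) :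
    ∀ᶠ x : (ι → φ₀.ker →L[𝕜] φ₀.ker) × (ι × Q → κ → 𝕜) in 𝓝 (1, h₁),
      ∃ y ∈ O, ∃ σ : φ₀.ker →ₗ[𝕜] S, Function.Injective σ ∧
        (∀ p, (moveFlags (fun p => (B p).comap φ₀.ker.subtype) x.1 p).map σ ≤
          moveFlags B y.1 p) ∧
        (Function.Injective (relMap (moveFlags (fun p => (B p).comap φ₀.ker.subtype) x.1) x.2) →
          Function.Injective (relMap (moveFlags B y.1) y.2)) := by
  have hminB : ∀ᶠ h in 𝓝 h₁, finrank 𝕜 (compatHom B h₁) ≤ finrank 𝕜 (compatHom B h) := by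
    filter_upwards [(Continuous.prodMk_right 1).continuousAt.eventually (hO.mem_nhds h₁O)] with h hh
    have hle := hmin (1, h) hh
    rwa [moveFlags_one] at hle
  obtain ⟨G, hG, hGev⟩ := exists_compatHom_transport hB hminB hφ₀ hker
  have hGO := hG.prodMk_nhds continuousAt_snd.tendsto
  filter_upwards [hGev, hGO.eventually (hO.mem_nhds h₁O),
    hGO.eventually (eventually_finrank_compatHom_moveFlags_le B h₁)]
    with x ⟨φ, hφ, σ, hσ, hσker⟩ hxO hle
  have hminG : ∀ᶠ h in 𝓝 x.2, finrank 𝕜 (compatHom (moveFlags B (G x)) x.2) ≤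
      finrank 𝕜 (compatHom (moveFlags B (G x)) h) := by
    filter_upwards [(Continuous.prodMk_right (G x)).continuousAt.eventually (hO.mem_nhds hxO)]
      with h hh using hle.trans (hmin (G x, h) hh)
  exact ⟨(G x, x.2), hxO, σ, hσ, fun p => (hσker p).trans_le inf_le_left,
    injective_relMap_of_map_eq_inf_ker hminG hφ hσ hσker⟩

/-- Where no nonzero map is compatible, the whole space destabilizes. Otherwise one restricts
to the kernel of a generic compatible map, chosen in a family of least dimension and with the
smallest intersections with the flags. -/
theorem exists_destabilizing {A : ι × Q → Submodule 𝕜 S} (hA : ∀ j, Antitone fun q => A (j, q))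
    {O : Set ((ι → S →L[𝕜] S) × (ι × Q → κ → 𝕜))} (hO : IsOpen O) (hne : O.Nonempty)
    (hinj : ∀ x ∈ O, ¬ Function.Injective (relMap (moveFlags A x.1) x.2)) :
    ∃ x ∈ O, ∃ U : Submodule 𝕜 S,
      Fintype.card κ * finrank 𝕜 U < ∑ p, finrank 𝕜 (moveFlags A x.1 p ⊓ U : Submodule 𝕜 S) := by
  induction hn : finrank 𝕜 S using Nat.strong_induction_on generalizing S with
  | _ n ih =>
  by_cases hbot : ∃ x ∈ O, compatHom (moveFlags A x.1) x.2 = ⊥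
  · obtain ⟨x, hx, hxbot⟩ := hbot
    refine ⟨x, hx, ⊤, ?_⟩
    rw [finrank_top]
    exact (mul_finrank_lt_of_compatHom_eq_bot hxbot (hinj x hx)).trans_le
      (Finset.sum_le_sum fun p _ => Submodule.finrank_mono (inf_top_eq _).ge)
  push Not at hbot
  obtain ⟨g, h₁, hgO, φ, hφ, hφ0, hmin, hker⟩ := exists_locally_minimal_compatHom hO hne hbot
  let O' : Set ((ι → S →L[𝕜] S) × (ι × Q → κ → 𝕜)) := {x | (x.1 * g, x.2) ∈ O}
  have hO' : IsOpen O' := hO.preimage (by fun_prop)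
  have h₁O' : (1, h₁) ∈ O' := by simpa [O'] using hgO
  obtain ⟨OK, hOK, hOKopen, h₁OK⟩ := eventually_nhds_iff.1 (eventually_exists_descent
    (antitone_moveFlags hA g) hO' h₁O'
    (fun x hx => by rw [moveFlags_moveFlags]; exact hmin (x.1 * g, x.2) hx) hφ hker)
  have hlt : finrank 𝕜 φ.ker < n := hn ▸ Submodule.finrank_lt fun htop =>
    hφ0 (ContinuousLinearMap.coe_injective (LinearMap.ker_eq_top.1 htop))
  obtain ⟨x, hx, U, hU⟩ := ih _ hlt
    (fun j q q' hq => Submodule.comap_mono (antitone_moveFlags hA g j hq)) hOKopen ⟨_, h₁OK⟩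
    (fun x hx hxinj => by
      obtain ⟨y, hy, -, -, -, hyinj⟩ := hOK x hx
      have hyinj' := hyinj hxinj
      rw [moveFlags_moveFlags] at hyinj'
      exact hinj (y.1 * g, y.2) hy hyinj') rfl
  obtain ⟨y, hy, σ, hσ, hσle, -⟩ := hOK x hx
  refine ⟨(y.1 * g, y.2), hy, U.map σ, ?_⟩
  rw [finrank_map_of_injective hσ]
  refine hU.trans_le (Finset.sum_le_sum fun p _ => ?_)
  rw [← finrank_map_of_injective hσ, ← moveFlags_moveFlags]
  exact Submodule.finrank_mono (le_inf ((Submodule.map_mono inf_le_left).trans (hσle p))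
    (Submodule.map_mono inf_le_right))

/-- The slope inequality `∑ p, dim (A p ∩ U) ≤ m * dim U` for all subspaces `U`, that is, the
semistability of the family `A` when `∑ p, dim (A p) = m * dim S`. -/
def IsSemistable {P : Type*} [Fintype P] (m : ℕ) (A : P → Submodule 𝕜 S) : Prop :=
  ∀ U : Submodule 𝕜 S, ∑ p, finrank 𝕜 (A p ⊓ U : Submodule 𝕜 S) ≤ m * finrank 𝕜 U

theorem exists_injective_relMap {A : ι × Q → Submodule 𝕜 S}
    (hA : ∀ j, Antitone fun q => A (j, q))
    (hss : ∀ᶠ g in 𝓝 1, IsSemistable (Fintype.card κ) (moveFlags A g)) :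
    ∃ᶠ g in 𝓝 1, ∃ h : ι × Q → κ → 𝕜, Function.Injective (relMap (moveFlags A g) h) := by
  intro hnot
  obtain ⟨O, hOsub, hO, h1⟩ := eventually_nhds_iff.1 (hss.and hnot)
  obtain ⟨x, hx, U, hU⟩ := exists_destabilizing (κ := κ) hA (hO.preimage continuous_fst)
    ⟨(1, 0), h1⟩ fun x hx hinj => (hOsub _ hx).2 ⟨x.2, hinj⟩
  exact hU.not_ge ((hOsub _ hx).1 U)

end Schofield

/-! ### Tight families of subspaces are stably semistable -/

section Overlap

variable {𝕜 E : Type*} [RCLike 𝕜] [NormedAddCommGroup E] [InnerProductSpace 𝕜 E]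
  [FiniteDimensional 𝕜 E]

/-- The trace of the product of the orthogonal projections onto `U` and `V`, a continuous
substitute for the dimension of `U ⊓ V`. -/
noncomputable def overlap (U V : Submodule 𝕜 E) : ℝ :=
  RCLike.re (LinearMap.trace 𝕜 E (U.starProjection ∘ₗ (V.starProjection : E →ₗ[𝕜] E)))

theorem overlap_comm (U V : Submodule 𝕜 E) : overlap U V = overlap V U := by
  rw [overlap, overlap, LinearMap.trace_comp_comm']

theorem trace_comp_starProjection (T : E →ₗ[𝕜] E) (V : Submodule 𝕜 E) :
    LinearMap.trace 𝕜 E (T ∘ₗ V.starProjection) =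
      ∑ l, inner 𝕜 (stdOrthonormalBasis 𝕜 V l : E) (T (stdOrthonormalBasis 𝕜 V l)) := by
  have hfactor : (V.starProjection : E →ₗ[𝕜] E) =
      V.subtype ∘ₗ (V.orthogonalProjectionOnto : E →ₗ[𝕜] V) := rfl
  rw [hfactor, ← LinearMap.comp_assoc, LinearMap.trace_comp_comm',
    LinearMap.trace_eq_sum_inner _ (stdOrthonormalBasis 𝕜 V)]
  refine Finset.sum_congr rfl fun l _ => ?_
  simp

theorem overlap_eq_sum (U V : Submodule 𝕜 E) :
    overlap U V = ∑ l, ‖U.starProjection (stdOrthonormalBasis 𝕜 V l : E)‖ ^ 2 := by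
  rw [overlap, trace_comp_starProjection, map_sum]
  refine Finset.sum_congr rfl fun l _ => ?_
  rw [ContinuousLinearMap.coe_coe, ← Submodule.inner_starProjection_left_eq_right,
    U.re_inner_starProjection_eq_normSq, Submodule.starProjection_apply, Submodule.coe_norm]

theorem overlap_mono_right (U : Submodule 𝕜 E) {V W : Submodule 𝕜 E} (hVW : V ≤ W) :
    overlap U V ≤ overlap U W := by
  rw [overlap_comm U V, overlap_comm U W, overlap_eq_sum, overlap_eq_sum]
  refine Finset.sum_le_sum fun l _ => ?_
  gcongr
  rw [← Submodule.starProjection_comp_starProjection_of_le hVW]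
  exact Submodule.norm_starProjection_apply_le _ _

theorem trace_starProjection (V : Submodule 𝕜 E) :
    LinearMap.trace 𝕜 E V.starProjection = finrank 𝕜 V :=
  LinearMap.IsProj.trace ⟨V.starProjection_apply_mem, fun _ => V.starProjection_eq_self_iff.2⟩

theorem sum_overlap_of_sum_starProjection_eq {P : Type*} [Fintype P] {A : P → Submodule 𝕜 E}
    {m : ℕ} (hA : ∑ p, (A p).starProjection = (m : E →L[𝕜] E)) (U : Submodule 𝕜 E) :
    ∑ p, overlap (A p) U = m * finrank 𝕜 U := by
  have hcomp : ∑ p, ((A p).starProjection : E →ₗ[𝕜] E) ∘ₗ (U.starProjection : E →ₗ[𝕜] E) =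
      (m : 𝕜) • (U.starProjection : E →ₗ[𝕜] E) := by
    ext v
    have hv := congrArg (· (U.starProjection v)) hA
    simpa [LinearMap.sum_apply, _root_.sum_apply, Nat.cast_smul_eq_nsmul] using hv
  simp only [overlap]
  rw [← map_sum, ← map_sum, hcomp]
  simp [trace_starProjection]

theorem sum_finrank_of_sum_starProjection_eq {P : Type*} [Fintype P] {A : P → Submodule 𝕜 E}
    {m : ℕ} (hA : ∑ p, (A p).starProjection = (m : E →L[𝕜] E)) :
    ∑ p, finrank 𝕜 (A p) = m * finrank 𝕜 E := by
  have hsum := sum_overlap_of_sum_starProjection_eq hA ⊤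
  have htop (p : P) : overlap (A p) ⊤ = finrank 𝕜 (A p) := by
    rw [overlap, Submodule.starProjection_top]
    simp [trace_starProjection]
  simp only [htop, finrank_top] at hsum
  exact_mod_cast hsum

theorem mul_finrank_le_overlap {A D : Submodule 𝕜 E} {ε : ℝ}
    (hD : ∀ d ∈ D, ‖d - A.starProjection d‖ ≤ ε * ‖d‖) :
    (1 - ε ^ 2) * finrank 𝕜 D ≤ overlap A D := by
  rw [overlap_eq_sum]
  have hle (l : Fin (finrank 𝕜 D)) :
      1 - ε ^ 2 ≤ ‖A.starProjection (stdOrthonormalBasis 𝕜 D l : E)‖ ^ 2 := by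
    have hnorm : ‖(stdOrthonormalBasis 𝕜 D l : E)‖ = 1 := (stdOrthonormalBasis 𝕜 D).norm_eq_one l
    have hdist := hD _ (stdOrthonormalBasis 𝕜 D l).2
    have hpyth := Submodule.norm_sq_eq_add_norm_sq_starProjection
      (stdOrthonormalBasis 𝕜 D l : E) A
    rw [Submodule.starProjection_orthogonal_val, hnorm] at hpyth
    rw [hnorm, mul_one] at hdist
    have := pow_le_pow_left₀ (norm_nonneg _) hdist 2
    linarith
  calc (1 - ε ^ 2) * finrank 𝕜 D = ∑ _ : Fin (finrank 𝕜 D), (1 - ε ^ 2) := by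
        rw [Finset.sum_const, Finset.card_univ, Fintype.card_fin, nsmul_eq_mul, mul_comm]
    _ ≤ _ := Finset.sum_le_sum fun l _ => hle l

theorem norm_sub_starProjection_le {A : Submodule 𝕜 E} {a : E} (ha : a ∈ A) (d : E) :
    ‖d - A.starProjection d‖ ≤ ‖d - a‖ := by
  rw [Submodule.starProjection_minimal]
  exact ciInf_le ⟨0, Set.forall_mem_range.2 fun _ => norm_nonneg _⟩ (⟨a, ha⟩ : A)

theorem eventually_norm_sub_starProjection_le {ε : ℝ} (hε : 0 < ε) :
    ∀ᶠ g : E →L[𝕜] E in 𝓝 1, ∀ (A : Submodule 𝕜 E), ∀ d ∈ A.map (g : E →ₗ[𝕜] E),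
      ‖d - A.starProjection d‖ ≤ ε * ‖d‖ := by
  have hδ : 0 < min (1 / 2) (ε / 2) := by positivity
  filter_upwards [Metric.ball_mem_nhds 1 hδ] with g hg A d hd
  obtain ⟨a, ha, rfl⟩ := hd
  rw [mem_ball_iff_norm, lt_min_iff] at hg
  have hmove : ‖g a - a‖ ≤ ‖g - 1‖ * ‖a‖ := (g - 1).le_opNorm a
  have hnorm : ‖a‖ ≤ 2 * ‖g a‖ := by
    have := norm_sub_norm_le a (g a)
    rw [norm_sub_rev] at this
    nlinarith [norm_nonneg a]
  refine (norm_sub_starProjection_le ha _).trans (hmove.trans ?_)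
  calc ‖g - 1‖ * ‖a‖ ≤ (ε / 2) * (2 * ‖g a‖) := by gcongr; exact hg.2.le
    _ = ε * ‖g a‖ := by ring

theorem isSemistable_of_norm_sub_starProjection_le {P : Type*} [Fintype P]
    {A B : P → Submodule 𝕜 E} {m : ℕ} (hA : ∑ p, (A p).starProjection = (m : E →L[𝕜] E)) {ε : ℝ}
    (hε : ε ^ 2 * (Fintype.card P * finrank 𝕜 E : ℕ) < 1)
    (hB : ∀ p, ∀ d ∈ B p, ‖d - (A p).starProjection d‖ ≤ ε * ‖d‖) : IsSemistable m B := by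
  intro U
  by_contra! hlt
  have hoverlap : (1 - ε ^ 2) * (∑ p, finrank 𝕜 (B p ⊓ U : Submodule 𝕜 E) : ℕ) ≤
      m * finrank 𝕜 U := by
    rw [← sum_overlap_of_sum_starProjection_eq hA, Nat.cast_sum, Finset.mul_sum]
    exact Finset.sum_le_sum fun p _ => (mul_finrank_le_overlap fun d hd =>
      hB p d (Submodule.mem_inf.1 hd).1).trans
      (overlap_mono_right _ inf_le_right)
  have hdim : ∑ p, finrank 𝕜 (B p ⊓ U : Submodule 𝕜 E) ≤ Fintype.card P * finrank 𝕜 E := by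
    simpa using Finset.sum_le_sum fun p (_ : p ∈ Finset.univ) => Submodule.finrank_le (B p ⊓ U)
  have hε' := (mul_le_mul_of_nonneg_left (Nat.cast_le (α := ℝ).2 hdim) (sq_nonneg ε)).trans_lt hε
  have hlt' : ((m * finrank 𝕜 U : ℕ) : ℝ) + 1 ≤
      (∑ p, finrank 𝕜 (B p ⊓ U : Submodule 𝕜 E) : ℕ) := by exact_mod_cast hlt
  push_cast at hlt' hε' hoverlap
  linarith

theorem eventually_isSemistable_moveFlags {ι Q : Type*} [Fintype ι] [Fintype Q]
    {A : ι × Q → Submodule 𝕜 E} {m : ℕ} (hA : ∑ p, (A p).starProjection = (m : E →L[𝕜] E)) :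
    ∀ᶠ g in 𝓝 1, IsSemistable m (moveFlags A g) := by
  let M : ℕ := Fintype.card (ι × Q) * finrank 𝕜 E
  let ε : ℝ := 1 / (M + 1)
  have hε0 : 0 < ε := by positivity
  have hε : ε ^ 2 * M < 1 := by
    rw [div_pow, one_pow, one_div_mul_eq_div, div_lt_one (by positivity)]
    nlinarith
  have heval (j : ι) : Tendsto (fun g : ι → E →L[𝕜] E => g j) (𝓝 1) (𝓝 1) :=
    (continuous_apply j).tendsto' 1 1 rfl
  have hclose : ∀ᶠ g : ι → E →L[𝕜] E in 𝓝 1, ∀ j (B : Submodule 𝕜 E),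
      ∀ d ∈ B.map (g j : E →ₗ[𝕜] E), ‖d - B.starProjection d‖ ≤ ε * ‖d‖ :=
    eventually_all.2 fun j => (heval j).eventually (eventually_norm_sub_starProjection_le hε0)
  filter_upwards [hclose] with g hg
  exact isSemistable_of_norm_sub_starProjection_le hA hε fun p => hg p.1 (A p)

end Overlap

/-! ### Relations with matrix coefficients -/

section MatrixRelations

variable {𝕜 S : Type*} [Field 𝕜] [AddCommGroup S] [Module 𝕜 S]

theorem trace_pi_eq_sum {P : Type*} [Fintype P] [DecidableEq P] {V : P → Type*}
    [∀ p, AddCommGroup (V p)] [∀ p, Module 𝕜 (V p)] [∀ p, FiniteDimensional 𝕜 (V p)]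
    (f : (∀ p, V p) →ₗ[𝕜] (∀ p, V p)) :
    LinearMap.trace 𝕜 _ f =
      ∑ p, LinearMap.trace 𝕜 _ (LinearMap.proj p ∘ₗ f ∘ₗ LinearMap.single 𝕜 V p) := by
  have hf : f = ∑ p, (f ∘ₗ LinearMap.single 𝕜 V p) ∘ₗ LinearMap.proj p := by
    refine LinearMap.ext fun v => ?_
    simp only [LinearMap.sum_apply, LinearMap.comp_apply, LinearMap.proj_apply, ← map_sum]
    exact congrArg f (Finset.univ_sum_single v).symm
  conv_lhs => rw [hf, map_sum]
  exact Finset.sum_congr rfl fun p _ => LinearMap.trace_comp_comm' _ _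

variable {ι κ : Type*} [Fintype κ]

/-- The endomorphism of `κ → S` through which right multiplication of the coefficients by `c`
acts on relations. -/
def columnMap (S : Type*) [AddCommGroup S] [Module 𝕜 S] (c : Matrix κ κ 𝕜) :
    (κ → S) →ₗ[𝕜] (κ → S) :=
  LinearMap.pi fun k' => ∑ k, c k k' • LinearMap.proj k

theorem columnMap_apply (c : Matrix κ κ 𝕜) (w : κ → S) (k' : κ) :
    columnMap S c w k' = ∑ k, c k k' • w k := by
  simp [columnMap]

theorem trace_columnMap [FiniteDimensional 𝕜 S] (c : Matrix κ κ 𝕜) :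
    LinearMap.trace 𝕜 _ (columnMap S c) = c.trace * finrank 𝕜 S := by
  classical
  rw [trace_pi_eq_sum, Matrix.trace, Finset.sum_mul]
  refine Finset.sum_congr rfl fun k _ => ?_
  have hdiag : LinearMap.proj k ∘ₗ columnMap S c ∘ₗ LinearMap.single 𝕜 (fun _ => S) k =
      c k k • LinearMap.id := by
    ext a
    simp [columnMap_apply, Pi.single_apply]
  rw [hdiag, map_smul, LinearMap.trace_id, smul_eq_mul, Matrix.diag_apply]

theorem sum_smul_mem_of_isLowerTriangular [LinearOrder κ] {A : κ → Submodule 𝕜 S}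
    (hA : Antitone A) {b : Matrix κ κ 𝕜} (hb : b.IsLowerTriangular) (p : κ) (t : ∀ q, A q) :
    ∑ q, b q p • (t q : S) ∈ A p := by
  refine Submodule.sum_mem _ fun q _ => ?_
  rcases lt_or_ge q p with hq | hq
  · rw [hb (OrderDual.toDual_lt_toDual.2 hq), zero_smul]
    exact zero_mem _
  · exact Submodule.smul_mem _ _ (hA hq (t q).2)

section RowMap

variable [LinearOrder κ] {A : ι × κ → Submodule 𝕜 S} {b : ι → Matrix κ κ 𝕜}

/-- The endomorphism of `∀ p, A p` through which left multiplication of the coefficients by the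
lower triangular matrices `b j` acts on relations. -/
def rowMap (hA : ∀ j, Antitone fun q => A (j, q)) (hb : ∀ j, (b j).IsLowerTriangular) :
    (∀ p, A p) →ₗ[𝕜] (∀ p, A p) where
  toFun t p := ⟨∑ q, b p.1 q p.2 • (t (p.1, q) : S),
    sum_smul_mem_of_isLowerTriangular (hA p.1) (hb p.1) p.2 fun q => t (p.1, q)⟩
  map_add' t t' := by
    ext
    simp [Finset.sum_add_distrib]
  map_smul' c t := by
    ext
    simp [Finset.smul_sum, smul_comm c]

theorem rowMap_apply (hA : ∀ j, Antitone fun q => A (j, q)) (hb : ∀ j, (b j).IsLowerTriangular)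
    (t : ∀ p, A p) (p : ι × κ) :
    (rowMap hA hb t p : S) = ∑ q, b p.1 q p.2 • (t (p.1, q) : S) := rfl

end RowMap

variable [Fintype ι]

/-- `relMap A h` where `h` consists of the rows of a tuple `u` of matrices, as a linear function
of `u`. -/
def rowRelMap (A : ι × κ → Submodule 𝕜 S) :
    (ι → Matrix κ κ 𝕜) →ₗ[𝕜] (∀ p, A p) →ₗ[𝕜] (κ → S) where
  toFun u := relMap A fun p => u p.1 p.2
  map_add' u w := by
    ext1 t
    funext k
    simp [relMap_apply, add_smul, Finset.sum_add_distrib]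
  map_smul' c u := by
    ext1 t
    funext k
    simp [relMap_apply, Finset.smul_sum, smul_smul]

theorem rowRelMap_apply (A : ι × κ → Submodule 𝕜 S) (u : ι → Matrix κ κ 𝕜) (t : ∀ p, A p)
    (k : κ) : rowRelMap A u t k = ∑ p : ι × κ, u p.1 p.2 k • (t p : S) :=
  relMap_apply _ _ _ _

theorem rowRelMap_mul_right (A : ι × κ → Submodule 𝕜 S) (u : ι → Matrix κ κ 𝕜)
    (c : Matrix κ κ 𝕜) : rowRelMap A (fun j => u j * c) = columnMap S c ∘ₗ rowRelMap A u := by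
  ext1 t
  funext k'
  rw [LinearMap.comp_apply, columnMap_apply]
  simp only [rowRelMap_apply, Matrix.mul_apply, Finset.smul_sum, Finset.sum_smul, smul_smul]
  rw [Finset.sum_comm]
  simp only [mul_comm]

variable [LinearOrder κ] {A : ι × κ → Submodule 𝕜 S} {b : ι → Matrix κ κ 𝕜}

theorem rowRelMap_mul_left (hA : ∀ j, Antitone fun q => A (j, q))
    (hb : ∀ j, (b j).IsLowerTriangular) (u : ι → Matrix κ κ 𝕜) :
    rowRelMap A (b * u) = rowRelMap A u ∘ₗ rowMap hA hb := by
  ext1 t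
  funext k
  rw [LinearMap.comp_apply, rowRelMap_apply, rowRelMap_apply]
  simp only [rowMap_apply, Fintype.sum_prod_type, Pi.mul_apply, Matrix.mul_apply, Finset.smul_sum,
    Finset.sum_smul, smul_smul]
  refine Finset.sum_congr rfl fun j _ => ?_
  rw [Finset.sum_comm]
  simp only [mul_comm]

theorem trace_rowMap [FiniteDimensional 𝕜 S] (hA : ∀ j, Antitone fun q => A (j, q))
    (hb : ∀ j, (b j).IsLowerTriangular) :
    LinearMap.trace 𝕜 _ (rowMap hA hb) = ∑ p : ι × κ, b p.1 p.2 p.2 * finrank 𝕜 (A p) := by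
  classical
  rw [trace_pi_eq_sum]
  refine Finset.sum_congr rfl fun p _ => ?_
  have hdiag : LinearMap.proj p ∘ₗ rowMap hA hb ∘ₗ LinearMap.single 𝕜 (fun p => A p) p =
      b p.1 p.2 p.2 • LinearMap.id := by
    ext a
    simp only [LinearMap.comp_apply, LinearMap.proj_apply, rowMap_apply, LinearMap.single_apply]
    rw [Finset.sum_eq_single p.2 (fun q _ hq => ?_) (by simp)]
    · simp
    · rw [Pi.single_eq_of_ne fun h => hq (congrArg Prod.snd h)]
      simp
  rw [hdiag, map_smul, LinearMap.trace_id, smul_eq_mul]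

end MatrixRelations

/-! ### Extremal unitary tuples -/

section DetMax

variable {𝕜 : Type*} [NontriviallyNormedField 𝕜] [CompleteSpace 𝕜]

open scoped Matrix.Norms.Elementwise in
theorem hasFDerivAt_det_one {n : Type*} [Fintype n] [DecidableEq n] :
    HasFDerivAt (det : Matrix n n 𝕜 → 𝕜)
      (LinearMap.toContinuousLinearMap (traceLinearMap n 𝕜 𝕜)) 1 := by
  have hdiff : DifferentiableAt 𝕜 (det : Matrix n n 𝕜 → 𝕜) 1 := by
    simp only [funext det_apply]
    fun_prop
  refine hdiff.hasFDerivAt.congr_fderiv (ContinuousLinearMap.ext fun L => ?_)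
  have hline : HasDerivAt (fun r : 𝕜 => 1 + r • L) L 0 :=
    (((hasDerivAt_id (0 : 𝕜)).smul_const L).const_add 1).congr_deriv (one_smul 𝕜 L)
  have hdet : HasDerivAt (fun r : 𝕜 => det (1 + r • L)) L.trace 0 := by
    let p := (det (1 + (Polynomial.X : Polynomial 𝕜) • L.map Polynomial.C)).divX.divX
    have hrem : HasDerivAt (fun r => p.eval r * r ^ 2) 0 0 := by
      simpa using (p.hasDerivAt 0).fun_mul (hasDerivAt_pow 2 (0 : 𝕜))
    have hlin : HasDerivAt (fun r : 𝕜 => 1 + L.trace * r) L.trace 0 := by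
      simpa only [id, mul_one] using ((hasDerivAt_id (0 : 𝕜)).const_mul L.trace).const_add 1
    rw [funext fun r => det_one_add_smul r L]
    simpa only [add_zero] using hlin.fun_add hrem
  refine HasDerivAt.unique ?_ hdet
  exact HasFDerivAt.comp_hasDerivAt_of_eq 0 hdiff.hasFDerivAt hline (by simp)

variable {M V W : Type*} [AddCommGroup M] [Module 𝕜 M] [TopologicalSpace M]
  [IsTopologicalAddGroup M] [ContinuousSMul 𝕜 M] [T2Space M] [FiniteDimensional 𝕜 M]
  [AddCommGroup V] [Module 𝕜 V] [FiniteDimensional 𝕜 V] [AddCommGroup W] [Module 𝕜 W]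

theorem continuous_det_comp_linearMap (L : M →ₗ[𝕜] V →ₗ[𝕜] V) :
    Continuous fun x => LinearMap.det (L x) := by
  let B := Module.finBasis 𝕜 V
  simp only [← LinearMap.det_toMatrix B]
  exact ((LinearMap.toMatrix B B).toLinearMap ∘ₗ L).continuous_of_finiteDimensional.matrix_det

theorem exists_linearEquiv_norm_det_le_one (L : M →ₗ[𝕜] V →ₗ[𝕜] W) {C : Set M}
    (hC : IsCompact C) {x : M} (hx : x ∈ C) (hLx : Function.Bijective (L x)) :
    ∃ u ∈ C, ∃ e : V ≃ₗ[𝕜] W, (e : V →ₗ[𝕜] W) = L u ∧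
      ∀ w ∈ C, ‖LinearMap.det ((e.symm : W →ₗ[𝕜] V) ∘ₗ L w)‖ ≤ 1 := by
  let e₀ := LinearEquiv.ofBijective (L x) hLx
  let L₀ : M →ₗ[𝕜] V →ₗ[𝕜] V := LinearMap.compRight 𝕜 (e₀.symm : W →ₗ[𝕜] V) ∘ₗ L
  have hL₀ (w : M) : L₀ w = (e₀.symm : W →ₗ[𝕜] V) ∘ₗ L w := rfl
  obtain ⟨u, hu, hmax⟩ := hC.exists_isMaxOn ⟨x, hx⟩
    (continuous_det_comp_linearMap L₀).norm.continuousOn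
  have hL₀x : L₀ x = LinearMap.id := e₀.symm_comp
  have hdet : LinearMap.det (L₀ u) ≠ 0 := by
    have hle : ‖LinearMap.det (L₀ x)‖ ≤ ‖LinearMap.det (L₀ u)‖ := hmax hx
    rw [hL₀x, LinearMap.det_id, norm_one] at hle
    exact norm_pos_iff.1 (one_pos.trans_le hle)
  let f := LinearMap.equivOfDetNeZero (L₀ u) hdet
  have hf : (f : V →ₗ[𝕜] V) = L₀ u := rfl
  refine ⟨u, hu, f.trans e₀, ?_, fun w hw => ?_⟩
  · rw [LinearEquiv.coe_trans, hf, hL₀, ← LinearMap.comp_assoc, LinearEquiv.comp_symm,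
      LinearMap.id_comp]
  · have hle : ‖LinearMap.det (L₀ w)‖ ≤ ‖LinearMap.det (L₀ u)‖ := hmax hw
    have hinv : LinearMap.det (f.symm : V →ₗ[𝕜] V) * LinearMap.det (L₀ u) = 1 := by
      rw [← hf, LinearEquiv.det_symm_mul_det]
    rw [LinearEquiv.trans_symm, LinearEquiv.coe_trans, LinearMap.comp_assoc, ← hL₀,
      LinearMap.det_comp, norm_mul]
    calc _ ≤ ‖LinearMap.det (f.symm : V →ₗ[𝕜] V)‖ * ‖LinearMap.det (L₀ u)‖ := by gcongr
      _ = 1 := by rw [← norm_mul, hinv, norm_one]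

open scoped Matrix.Norms.Elementwise in
theorem re_trace_eq_zero_of_norm_det_le_one {M V : Type*} [NormedAddCommGroup M]
    [NormedSpace ℂ M] [FiniteDimensional ℂ M] [AddCommGroup V] [Module ℂ V]
    [FiniteDimensional ℂ V] (L : M →ₗ[ℂ] V →ₗ[ℂ] V) {γ : ℝ → M} {v : M}
    (hγ : HasDerivAt γ v 0) (hL : L (γ 0) = LinearMap.id)
    (hmax : ∀ t, ‖LinearMap.det (L (γ t))‖ ≤ 1) : (LinearMap.trace ℂ V (L v)).re = 0 := by
  let B := Module.finBasis ℂ V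
  let E : M →L[ℂ] Matrix (Fin (finrank ℂ V)) (Fin (finrank ℂ V)) ℂ :=
    LinearMap.toContinuousLinearMap ((LinearMap.toMatrix B B).toLinearMap ∘ₗ L)
  have hE (x : M) : E x = LinearMap.toMatrix B B (L x) := rfl
  have hE0 : E (γ 0) = 1 := by rw [hE, hL, LinearMap.toMatrix_id]
  have hEγ : HasDerivAt (fun t => E (γ t)) (E v) 0 :=
    (E.restrictScalars ℝ).hasFDerivAt.comp_hasDerivAt 0 hγ
  have hdet : HasDerivAt (fun t => (E (γ t)).det) (E v).trace 0 :=
    HasFDerivAt.comp_hasDerivAt_of_eq (0 : ℝ)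
      ((hasFDerivAt_det_one (𝕜 := ℂ) (n := Fin (finrank ℂ V))).restrictScalars ℝ) hEγ hE0.symm
  have hre : HasDerivAt (fun t => (E (γ t)).det.re) (E v).trace.re 0 :=
    Complex.reCLM.hasFDerivAt.comp_hasDerivAt 0 hdet
  have hlocmax : IsLocalMax (fun t => (E (γ t)).det.re) 0 := by
    refine Eventually.of_forall fun t => ?_
    beta_reduce
    rw [hE0, det_one, Complex.one_re, hE, LinearMap.det_toMatrix]
    exact (Complex.re_le_norm _).trans (hmax t)
  rw [LinearMap.trace_eq_matrix_trace ℂ B]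
  exact hlocmax.hasDerivAt_eq_zero hre

end DetMax

open scoped ComplexOrder in
theorem eq_zero_of_forall_re_trace_mul_eq_zero {κ : Type*} [Fintype κ] {Y : Matrix κ κ ℂ}
    (hY : Y.IsHermitian) (htr : ∀ H : Matrix κ κ ℂ, H.IsHermitian → (H * Y).trace.re = 0) :
    Y = 0 := by
  have hnonneg := Complex.nonneg_iff.1 (posSemidef_conjTranspose_mul_self Y).trace_nonneg
  refine trace_conjTranspose_mul_self_eq_zero_iff.1 (Complex.ext ?_ hnonneg.2.symm)
  rw [hY.eq]
  exact htr Y hY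

section UnitaryTuples

variable {ι κ : Type*} [Fintype κ] [DecidableEq κ]

open scoped Matrix.Norms.L2Operator in
theorem isCompact_unitaryGroup :
    IsCompact (unitaryGroup κ ℂ : Set (Matrix κ κ ℂ)) := by
  refine Metric.isCompact_of_isClosed_isBounded isClosed_unitary ?_
  refine (Metric.isBounded_closedBall (x := (0 : Matrix κ κ ℂ))
    (r := ‖(1 : Matrix κ κ ℂ)‖)).subset fun u hu => ?_
  rw [mem_closedBall_zero_iff, ← CStarRing.norm_mul_mem_unitary 1 hu, one_mul]

open scoped Matrix.Norms.L2Operator in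
theorem re_trace_eq_zero_of_conjTranspose_eq_neg [Finite ι] {V : Type*} [AddCommGroup V]
    [Module ℂ V] [FiniteDimensional ℂ V] (L : (ι → Matrix κ κ ℂ) →ₗ[ℂ] V →ₗ[ℂ] V)
    {u : ι → Matrix κ κ ℂ} (hu : ∀ j, u j ∈ unitaryGroup κ ℂ) (hL : L u = LinearMap.id)
    (hmax : ∀ w, (∀ j, w j ∈ unitaryGroup κ ℂ) → ‖LinearMap.det (L w)‖ ≤ 1)
    {a : ι → Matrix κ κ ℂ} (ha : ∀ j, (a j)ᴴ = -a j) :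
    (LinearMap.trace ℂ V (L (a * u))).re = 0 := by
  have := Fintype.ofFinite ι
  let γ : ℝ → ι → Matrix κ κ ℂ := fun t j => NormedSpace.exp (t • a j) * u j
  have hγ0 : γ 0 = u := by
    funext j
    simp [γ]
  have hγ : HasDerivAt γ (a * u) 0 := hasDerivAt_pi.2 fun j => by
    simpa using (hasDerivAt_exp_smul_const (𝕂 := ℝ) (a j) 0).mul_const (u j)
  have hγu (t : ℝ) (j : ι) : γ t j ∈ unitaryGroup κ ℂ := by
    let +nondep : NormedAlgebra ℚ (Matrix κ κ ℂ) := .restrictScalars ℚ ℂ _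
    refine mul_mem (NormedSpace.exp_mem_unitary_of_mem_skewAdjoint ?_) (hu j)
    rw [skewAdjoint.mem_iff, star_smul, star_eq_conjTranspose, ha]
    simp
  exact re_trace_eq_zero_of_norm_det_le_one L hγ (hγ0.symm ▸ hL) fun t => hmax _ (hγu t)

end UnitaryTuples

section Triangular

variable {κ : Type*} [LinearOrder κ]

theorem exists_skew_add_isLowerTriangular {M : Matrix κ κ ℂ} (hM : M.IsHermitian) :
    ∃ a b : Matrix κ κ ℂ, aᴴ = -a ∧ b.IsLowerTriangular ∧ b.diag = M.diag ∧ M = a + b := by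
  refine ⟨of fun q p => if q < p then M q p else if p < q then -M q p else 0,
    of fun q p => if q < p then 0 else if p < q then 2 * M q p else M q p, ?_, ?_, ?_, ?_⟩
  · ext q p
    have := hM.apply q p
    rcases lt_trichotomy q p with h | h | h
    · simp [h, h.not_gt, this]
    · simp [h]
    · simp [h, h.not_gt, this]
  · intro q p h
    simp [OrderDual.toDual_lt_toDual.1 h]
  · ext q
    simp
  · ext q p
    rcases lt_trichotomy q p with h | h | h
    · simp [h]
    · simp [h]
    · simp only [Matrix.add_apply, of_apply, h, h.not_gt, if_true, if_false]
      ring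

variable [Fintype κ] [LocallyFiniteOrderBot κ]

theorem exists_isLowerTriangular_mul_mem_unitaryGroup (x : Matrix κ κ ℂ) :
    ∃ b : Matrix κ κ ℂ, ∃ u ∈ unitaryGroup κ ℂ, b.IsLowerTriangular ∧ x = b * u := by
  let f : κ → EuclideanSpace ℂ κ := fun q => WithLp.toLp 2 (x q)
  let e := InnerProductSpace.gramSchmidtOrthonormalBasis (𝕜 := ℂ) finrank_euclideanSpace f
  refine ⟨of fun q p => inner ℂ (e p) (f q), of fun p k => e p k, ?_, fun q p hqp => ?_, ?_⟩
  · rw [mem_unitaryGroup_iff]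
    ext p q
    have hpq := orthonormal_iff_ite.1 e.orthonormal q p
    rw [PiLp.inner_apply] at hpq
    simpa [mul_apply, one_apply, eq_comm (a := q)] using hpq
  · exact InnerProductSpace.gramSchmidtOrthonormalBasis_inv_triangular _ f
      (OrderDual.toDual_lt_toDual.1 hqp)
  · ext q k
    have hk := congrArg (fun v : EuclideanSpace ℂ κ => v k) (e.sum_repr' (f q))
    simpa [mul_apply, f] using hk.symm

end Triangular

section FlagMoment

variable {ι κ S : Type*} [Fintype ι] [Fintype κ] [AddCommGroup S] [Module ℂ S]

/-- The sum of the diagonal matrices of the dimensions of the flags `A (j, ·)`, conjugated by the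
matrices `u j`. This is the moment map for the action of unitary matrices on relations. -/
noncomputable def flagMoment [DecidableEq κ] (A : ι × κ → Submodule ℂ S)
    (u : ι → Matrix κ κ ℂ) : Matrix κ κ ℂ :=
  ∑ j, (u j)ᴴ * diagonal (fun q => (finrank ℂ (A (j, q)) : ℂ)) * u j

theorem isHermitian_flagMoment [DecidableEq κ] (A : ι × κ → Submodule ℂ S)
    (u : ι → Matrix κ κ ℂ) : (flagMoment A u).IsHermitian := by
  simp [IsHermitian, flagMoment, conjTranspose_sum, Matrix.mul_assoc, diagonal_conjTranspose,
    Pi.star_def]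

theorem trace_mul_flagMoment [DecidableEq κ] (A : ι × κ → Submodule ℂ S)
    (u : ι → Matrix κ κ ℂ) (H : Matrix κ κ ℂ) :
    (H * flagMoment A u).trace =
      ∑ p : ι × κ, (u p.1 * H * (u p.1)ᴴ).diag p.2 * finrank ℂ (A p) := by
  rw [flagMoment, Finset.mul_sum, trace_sum, Fintype.sum_prod_type]
  refine Finset.sum_congr rfl fun j _ => ?_
  rw [← Matrix.mul_assoc, trace_mul_comm, ← Matrix.mul_assoc, ← Matrix.mul_assoc, trace]
  simp only [diag_apply, mul_diagonal]

variable [FiniteDimensional ℂ S] [LinearOrder κ] {A : ι × κ → Submodule ℂ S}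

theorem re_trace_mul_flagMoment (hA : ∀ j, Antitone fun q => A (j, q)) {u : ι → Matrix κ κ ℂ}
    (hu : ∀ j, u j ∈ unitaryGroup κ ℂ) {e : (∀ p, A p) ≃ₗ[ℂ] (κ → S)}
    (he : (e : (∀ p, A p) →ₗ[ℂ] (κ → S)) = rowRelMap A u)
    (hskew : ∀ a : ι → Matrix κ κ ℂ, (∀ j, (a j)ᴴ = -a j) →
      (LinearMap.trace ℂ _ ((e.symm : (κ → S) →ₗ[ℂ] _) ∘ₗ rowRelMap A (a * u))).re = 0)
    {H : Matrix κ κ ℂ} (hH : H.IsHermitian) :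
    (H * flagMoment A u).trace.re = (H.trace * finrank ℂ S).re := by
  choose a b ha hb hdiag hab using fun j =>
    exists_skew_add_isLowerTriangular (isHermitian_mul_mul_conjTranspose (u j) hH)
  have hsplit : (fun j => u j * H) = a * u + b * u := by
    funext j
    rw [← add_mul, Pi.mul_apply, Pi.add_apply, ← hab, Matrix.mul_assoc,
      ← star_eq_conjTranspose, mem_unitaryGroup_iff'.1 (hu j), Matrix.mul_one]
  have hright : LinearMap.trace ℂ _ ((e.symm : (κ → S) →ₗ[ℂ] _) ∘ₗ
      rowRelMap A fun j => u j * H) = H.trace * finrank ℂ S := by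
    rw [rowRelMap_mul_right, ← he, LinearMap.trace_comp_comm', LinearMap.comp_assoc,
      LinearEquiv.comp_symm, LinearMap.comp_id, trace_columnMap]
  have hleft : LinearMap.trace ℂ _ ((e.symm : (κ → S) →ₗ[ℂ] _) ∘ₗ rowRelMap A (b * u)) =
      (H * flagMoment A u).trace := by
    rw [rowRelMap_mul_left hA hb, ← he, ← LinearMap.comp_assoc, LinearEquiv.symm_comp,
      LinearMap.id_comp, trace_rowMap, trace_mul_flagMoment]
    exact Finset.sum_congr rfl fun p _ => by rw [← hdiag, diag_apply]
  rw [← hleft, ← hright, hsplit, map_add, LinearMap.comp_add, map_add, Complex.add_re,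
    hskew a ha, zero_add]

theorem exists_unitary_bijective_rowRelMap [LocallyFiniteOrderBot κ]
    (hA : ∀ j, Antitone fun q => A (j, q))
    (hdim : ∑ p, finrank ℂ (A p) = Fintype.card κ * finrank ℂ S) {h : ι × κ → κ → ℂ}
    (hinj : Function.Injective (relMap A h)) :
    ∃ w : ι → Matrix κ κ ℂ, (∀ j, w j ∈ unitaryGroup κ ℂ) ∧
      Function.Bijective (rowRelMap A w) := by
  have hfin : finrank ℂ (∀ p, A p) = finrank ℂ (κ → S) := by
    rw [finrank_pi_fintype, finrank_pi_fintype, hdim, Finset.sum_const, Finset.card_univ,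
      smul_eq_mul]
  choose b w hw hb hbw using fun j =>
    exists_isLowerTriangular_mul_mem_unitaryGroup (of fun q => h (j, q))
  have hfactor : relMap A h = rowRelMap A w ∘ₗ rowMap hA hb := by
    rw [← rowRelMap_mul_left, show b * w = fun j => of fun q => h (j, q) from
      funext fun j => (hbw j).symm]
    rfl
  have hsurj : Function.Surjective (rowRelMap A w) := by
    rw [LinearMap.injective_iff_surjective_of_finrank_eq_finrank hfin, hfactor,
      LinearMap.coe_comp] at hinj
    exact hinj.of_comp
  exact ⟨w, hw, (LinearMap.injective_iff_surjective_of_finrank_eq_finrank hfin).2 hsurj, hsurj⟩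

theorem exists_unitary_flagMoment_eq [LocallyFiniteOrderBot κ]
    (hA : ∀ j, Antitone fun q => A (j, q))
    (hdim : ∑ p, finrank ℂ (A p) = Fintype.card κ * finrank ℂ S) {h : ι × κ → κ → ℂ}
    (hinj : Function.Injective (relMap A h)) :
    ∃ u : ι → Matrix κ κ ℂ, (∀ j, u j ∈ unitaryGroup κ ℂ) ∧
      flagMoment A u = (finrank ℂ S : ℂ) • 1 := by
  obtain ⟨w, hw, hbij⟩ := exists_unitary_bijective_rowRelMap hA hdim hinj
  obtain ⟨u, hu, e, he, hmax⟩ := exists_linearEquiv_norm_det_le_one (rowRelMap A)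
    (isCompact_univ_pi fun _ : ι => isCompact_unitaryGroup (κ := κ)) (fun j _ => hw j) hbij
  have hu' (j : ι) : u j ∈ unitaryGroup κ ℂ := hu j (Set.mem_univ j)
  let L : (ι → Matrix κ κ ℂ) →ₗ[ℂ] (∀ p, A p) →ₗ[ℂ] (∀ p, A p) :=
    LinearMap.compRight ℂ (e.symm : (κ → S) →ₗ[ℂ] (∀ p, A p)) ∘ₗ rowRelMap A
  have hL : L u = LinearMap.id := by
    change (e.symm : (κ → S) →ₗ[ℂ] (∀ p, A p)) ∘ₗ rowRelMap A u = LinearMap.id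
    rw [← he, e.symm_comp]
  have hskew (a : ι → Matrix κ κ ℂ) (ha : ∀ j, (a j)ᴴ = -a j) :=
    re_trace_eq_zero_of_conjTranspose_eq_neg L hu' hL (fun v hv => hmax v fun j _ => hv j) ha
  have hscalar : ((finrank ℂ S : ℂ) • (1 : Matrix κ κ ℂ)).IsHermitian := by
    simp [IsHermitian]
  refine ⟨u, hu', sub_eq_zero.1 (eq_zero_of_forall_re_trace_mul_eq_zero
    ((isHermitian_flagMoment A u).sub hscalar) fun H hH => ?_)⟩
  rw [Matrix.mul_sub, trace_sub, Complex.sub_re, re_trace_mul_flagMoment hA hu' he hskew hH]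
  simp [mul_comm]

end FlagMoment

theorem eventually_injective {𝕜 ι E : Type*} [NontriviallyNormedField 𝕜] [NormedAddCommGroup E]
    [NormedSpace 𝕜 E] [CompleteSpace E] [Finite ι] :
    ∀ᶠ g : ι → E →L[𝕜] E in 𝓝 1, ∀ j, Function.Injective (g j) := by
  have heval (j : ι) : Tendsto (fun g : ι → E →L[𝕜] E => g j) (𝓝 1) (𝓝 1) :=
    (continuous_apply j).tendsto' 1 1 rfl
  have hunit (j : ι) : ∀ᶠ g : ι → E →L[𝕜] E in 𝓝 1, IsUnit (g j) :=
    (heval j).eventually (Units.isOpen.mem_nhds isUnit_one)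
  filter_upwards [eventually_all.2 hunit] with g hg j
  exact (Module.End.isUnit_iff _).1
    (ContinuousLinearMap.isUnit_iff_isUnit_toLinearMap.1 (hg j)) |>.1

theorem exists_unitary_flagMoment_eq_of_sum_starProjection_eq {ι S : Type*} [Fintype ι]
    [NormedAddCommGroup S] [InnerProductSpace ℂ S] [FiniteDimensional ℂ S] {m : ℕ}
    {A : ι × Fin m → Submodule ℂ S} (hA : ∀ j, Antitone fun q => A (j, q))
    (htight : ∑ p, (A p).starProjection = (m : S →L[ℂ] S)) :
    ∃ u : ι → Matrix (Fin m) (Fin m) ℂ, (∀ j, u j ∈ unitaryGroup (Fin m) ℂ) ∧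
      flagMoment A u = (finrank ℂ S : ℂ) • 1 := by
  have hss : ∀ᶠ g in 𝓝 1, IsSemistable (Fintype.card (Fin m)) (moveFlags A g) := by
    rw [Fintype.card_fin]
    exact eventually_isSemistable_moveFlags htight
  obtain ⟨g, ⟨h, hinj⟩, hg⟩ :=
    ((exists_injective_relMap hA hss).and_eventually eventually_injective).exists
  have hfin (p : ι × Fin m) : finrank ℂ (moveFlags A g p) = finrank ℂ (A p) :=
    finrank_map_of_injective (hg p.1) (A p)
  have hmoment (u : ι → Matrix (Fin m) (Fin m) ℂ) :
      flagMoment (moveFlags A g) u = flagMoment A u := by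
    simp only [flagMoment, hfin]
  simp only [← hmoment]
  refine exists_unitary_flagMoment_eq (antitone_moveFlags hA g) ?_ hinj
  simp only [hfin, Fintype.card_fin]
  exact sum_finrank_of_sum_starProjection_eq htight

/-! ### Horn triples of conjugate partitions -/

section SpectralFlag

/-- The partition conjugate to the one with parts `x i`: its part of 0-based index `q` is the
number of parts of `x` that exceed `q`. -/
def conjPart {ι : Type*} [Fintype ι] (x : ι → ℕ) (q : ℕ) : ℕ :=
  (Finset.univ.filter fun i => q < x i).card

theorem antitone_conjPart {ι : Type*} [Fintype ι] (x : ι → ℕ) : Antitone (conjPart x) :=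
  fun _ _ hpq => Finset.card_le_card <| Finset.monotone_filter_right _ fun _ _ => hpq.trans_lt

theorem conjPart_comp_equiv {ι κ : Type*} [Fintype ι] [Fintype κ] (x : ι → ℕ) (σ : κ ≃ ι) (q : ℕ) :
    conjPart (x ∘ σ) q = conjPart x q :=
  Finset.card_equiv σ (by simp)

theorem conjPart_add_conjPart_sub {ι : Type*} [Fintype ι] {m : ℕ} {x : ι → ℕ} (hx : ∀ i, x i ≤ m)
    (q : Fin m) : conjPart x q + conjPart (fun i => m - x i) q.rev =
      Fintype.card ι := by
  rw [conjPart, conjPart, ← Finset.card_univ,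
    ← Finset.card_filter_add_card_filter_not (s := Finset.univ) (fun i => (q : ℕ) < x i)]
  congr 3
  ext i
  have := hx i
  rw [Fin.val_rev]
  omega

variable {𝕜 ι E : Type*} [RCLike 𝕜] [Fintype ι] [NormedAddCommGroup E] [InnerProductSpace 𝕜 E]

/-- The sum of the eigenspaces, for the eigenvalues exceeding `q`, of the operator with eigenvectors
`e i` and eigenvalues `x i`. -/
def spectralFlag (e : OrthonormalBasis ι 𝕜 E) (x : ι → ℕ) (q : ℕ) : Submodule 𝕜 E :=
  Submodule.span 𝕜 (e '' {i | q < x i})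

theorem antitone_spectralFlag (e : OrthonormalBasis ι 𝕜 E) (x : ι → ℕ) :
    Antitone (spectralFlag e x) := fun _ _ hpq =>
  Submodule.span_mono <| Set.image_mono fun _ hi => hpq.trans_lt hi

theorem finrank_spectralFlag (e : OrthonormalBasis ι 𝕜 E) (x : ι → ℕ) (q : ℕ) :
    finrank 𝕜 (spectralFlag e x q) = conjPart x q := by
  rw [spectralFlag, Set.image_eq_range, finrank_span_eq_card, conjPart, ← Fintype.card_subtype]
  · rfl
  · exact e.orthonormal.linearIndependent.comp _ Subtype.val_injective

variable [FiniteDimensional 𝕜 E]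

theorem starProjection_spectralFlag_apply (e : OrthonormalBasis ι 𝕜 E) (x : ι → ℕ) (q : ℕ)
    (i : ι) : (spectralFlag e x q).starProjection (e i) = if q < x i then e i else 0 := by
  split_ifs with hi
  · exact Submodule.starProjection_eq_self_iff.2 (Submodule.subset_span ⟨i, hi, rfl⟩)
  · rw [Submodule.starProjection_apply_eq_zero_iff, ← Submodule.span_singleton_le_iff_mem]
    refine (Submodule.isOrtho_span.2 ?_)
    rintro _ rfl _ ⟨k, hk, rfl⟩
    exact e.inner_eq_zero fun hik => hi (hik ▸ hk)

theorem sum_starProjection_spectralFlag {m : ℕ} {e : OrthonormalBasis ι 𝕜 E} {x : ι → ℕ}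
    (hx : ∀ i, x i ≤ m) {T : E →L[𝕜] E} (hT : ∀ i, T (e i) = (x i : 𝕜) • e i) :
    ∑ q : Fin m, (spectralFlag e x q).starProjection = T := by
  refine ContinuousLinearMap.coe_injective (e.toBasis.ext fun i => ?_)
  have hcard : ((Finset.range m).filter (· < x i)).card = x i := by
    rw [show (Finset.range m).filter (· < x i) = Finset.range (x i) by grind, Finset.card_range]
  simp only [OrthonormalBasis.coe_toBasis, ContinuousLinearMap.coe_coe, _root_.sum_apply,
    starProjection_spectralFlag_apply, hT]
  rw [Fin.sum_univ_eq_sum_range (fun q => if q < x i then e i else 0), ← Finset.sum_filter,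
    Finset.sum_const, hcard, Nat.cast_smul_eq_nsmul]

end SpectralFlag

section EigVec

variable {k : ℕ} {X : Matrix (Fin k) (Fin k) ℂ}

theorem antitone_eigVec (hX : X.IsHermitian) : Antitone (eigVec X hX) := fun _ _ hij =>
  Tuple.monotone_sort hX.eigenvalues (Fin.rev_le_rev.2 hij)

theorem exists_perm_eigenvalues_eq (hX : X.IsHermitian) :
    ∃ σ : Equiv.Perm (Fin k), hX.eigenvalues = eigVec X hX ∘ σ :=
  ⟨(Fin.revPerm.trans (Tuple.sort hX.eigenvalues)).symm, by
    ext i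
    simp [eigVec]⟩

theorem eigVec_eq_of_charpoly_eq (hX : X.IsHermitian) {v : Fin k → ℝ} (hv : Antitone v)
    (h : X.charpoly = ∏ i, (Polynomial.X - Polynomial.C (v i : ℂ))) : eigVec X hX = v := by
  obtain ⟨σ, hσ⟩ := exists_perm_eigenvalues_eq hX
  have hmap : Finset.univ.val.map (eigVec X hX) = Finset.univ.val.map v := by
    refine Multiset.map_injective Complex.ofReal_injective ?_
    have hroots := hX.roots_charpoly_eq_eigenvalues
    rw [hσ, ← Function.comp_assoc, ← Multiset.map_map, Multiset.map_univ_val_equiv, h,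
      Polynomial.roots_prod _ _ (Finset.prod_ne_zero_iff.2 fun i _ =>
        Polynomial.X_sub_C_ne_zero _)] at hroots
    simp only [Polynomial.roots_X_sub_C, Multiset.bind_singleton] at hroots
    rw [Multiset.map_map, Multiset.map_map]
    exact hroots.symm
  rw [Fin.univ_val_map, Fin.univ_val_map, Multiset.coe_eq_coe] at hmap
  exact List.ofFn_injective <| hmap.eq_of_pairwise' (r := (· ≥ ·))
    (List.sortedGE_iff_pairwise.1 (antitone_eigVec hX).sortedGE_ofFn)
    (List.sortedGE_iff_pairwise.1 hv.sortedGE_ofFn)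

theorem eigVec_eq_of_conj_diagonal (hX : X.IsHermitian) {u : Matrix (Fin k) (Fin k) ℂ}
    (hu : u ∈ unitaryGroup (Fin k) ℂ) {v : Fin k → ℝ} (hv : Antitone v)
    (σ : Equiv.Perm (Fin k)) (h : X = uᴴ * diagonal (fun i => (v (σ i) : ℂ)) * u) :
    eigVec X hX = v := by
  refine eigVec_eq_of_charpoly_eq hX hv ?_
  rw [h, charpoly_mul_comm, ← Matrix.mul_assoc, ← star_eq_conjTranspose,
    mem_unitaryGroup_iff.1 hu, Matrix.one_mul, charpoly_diagonal]
  exact Equiv.prod_comp σ fun i => Polynomial.X - Polynomial.C (v i : ℂ)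

theorem eigVec_eq_sub_of_add_eq (hX : X.IsHermitian) {Y : Matrix (Fin k) (Fin k) ℂ}
    (hY : Y.IsHermitian) {c : ℝ} (hXY : X + Y = (c : ℂ) • 1) :
    eigVec Y hY = fun i => c - eigVec X hX i.rev := by
  obtain ⟨σ, hσ⟩ := exists_perm_eigenvalues_eq hX
  let U : Matrix (Fin k) (Fin k) ℂ := hX.eigenvectorUnitary
  have hU : U * star U = 1 := mem_unitaryGroup_iff.1 hX.eigenvectorUnitary.2
  have hXU : X = U * diagonal (fun i => (eigVec X hX (σ i) : ℂ)) * star U := by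
    conv_lhs => rw [hX.spectral_theorem, hσ, Unitary.conjStarAlgAut_apply]
    rfl
  refine eigVec_eq_of_conj_diagonal hY (Unitary.star_mem hX.eigenvectorUnitary.2)
    (fun i j hij => sub_le_sub_left (antitone_eigVec hX (Fin.rev_le_rev.2 hij)) _)
    (σ.trans Fin.revPerm) ?_
  calc
    Y = (c : ℂ) • (U * star U) - X := by rw [hU, ← hXY, add_sub_cancel_left]
    _ = U * ((c : ℂ) • 1 - diagonal fun i => (eigVec X hX (σ i) : ℂ)) * star U := by
      rw [Matrix.mul_sub, Matrix.sub_mul, ← hXU, Matrix.mul_smul, Matrix.mul_one, Matrix.smul_mul]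
    _ = _ := by
      rw [smul_one_eq_diagonal, diagonal_sub]
      simp [U, star_eq_conjTranspose]

theorem exists_orthonormalBasis_eigVec (hX : X.IsHermitian) :
    ∃ e : OrthonormalBasis (Fin k) ℂ (EuclideanSpace ℂ (Fin k)),
      ∀ i, toEuclideanCLM (𝕜 := ℂ) X (e i) = (eigVec X hX i : ℂ) • e i := by
  refine ⟨hX.eigenvectorBasis.reindex (Fin.revPerm.trans (Tuple.sort hX.eigenvalues)).symm,
    fun i => ?_⟩
  ext q
  have := congrFun (hX.mulVec_eigenvectorBasis
    ((Fin.revPerm.trans (Tuple.sort hX.eigenvalues)) i)) q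
  simpa [eigVec] using this

end EigVec

theorem exists_unitary_sum_conj_diagonal_conjPart {ι κ S : Type*} [Fintype ι] [Fintype κ]
    [NormedAddCommGroup S] [InnerProductSpace ℂ S] [FiniteDimensional ℂ S] {m : ℕ}
    {x : ι → κ → ℕ} (hx : ∀ j i, x j i ≤ m) (e : ι → OrthonormalBasis κ ℂ S) {T : ι → S →L[ℂ] S}
    (hT : ∀ j i, T j (e j i) = (x j i : ℂ) • e j i) (hsum : ∑ j, T j = (m : S →L[ℂ] S)) :
    ∃ u : ι → Matrix (Fin m) (Fin m) ℂ, (∀ j, u j ∈ unitaryGroup (Fin m) ℂ) ∧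
      ∑ j, (u j)ᴴ * diagonal (fun q : Fin m => (conjPart (x j) q : ℂ)) * u j =
        (finrank ℂ S : ℂ) • 1 := by
  let A : ι × Fin m → Submodule ℂ S := fun p => spectralFlag (e p.1) (x p.1) p.2
  have hA (j : ι) : Antitone fun q => A (j, q) := fun p q hpq =>
    antitone_spectralFlag (e j) (x j) (Fin.le_def.1 hpq)
  have hfin (j : ι) (q : Fin m) : finrank ℂ (A (j, q)) = conjPart (x j) q :=
    finrank_spectralFlag (e j) (x j) q
  have htight : ∑ p, (A p).starProjection = (m : S →L[ℂ] S) := by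
    have hproj (j : ι) : ∑ q : Fin m, (spectralFlag (e j) (x j) q).starProjection = T j :=
      sum_starProjection_spectralFlag (hx j) (hT j)
    simp only [A, Fintype.sum_prod_type, hproj, hsum]
  obtain ⟨u, hu, hmoment⟩ := exists_unitary_flagMoment_eq_of_sum_starProjection_eq hA htight
  simp only [flagMoment, hfin] at hmoment
  exact ⟨u, hu, hmoment⟩

theorem exists_sum_eq_smul_one_eigVec_eq_conjPart {ι : Type*} [Fintype ι] {r m : ℕ}
    {X : ι → Matrix (Fin r) (Fin r) ℂ} (hX : ∀ j, (X j).IsHermitian)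
    (hsum : ∑ j, X j = (m : ℂ) • 1) {x : ι → Fin r → ℕ} (hx : ∀ j i, x j i ≤ m)
    (heig : ∀ j, eigVec (X j) (hX j) = fun i => (x j i : ℝ)) :
    ∃ (Y : ι → Matrix (Fin m) (Fin m) ℂ) (hY : ∀ j, (Y j).IsHermitian),
      ∑ j, Y j = (r : ℂ) • 1 ∧
        ∀ j, eigVec (Y j) (hY j) = fun q : Fin m => (conjPart (x j) q : ℝ) := by
  choose e he using fun j => exists_orthonormalBasis_eigVec (hX j)
  have hT (j : ι) (i : Fin r) : toEuclideanCLM (𝕜 := ℂ) (X j) (e j i) = (x j i : ℂ) • e j i := by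
    rw [he, heig, Complex.ofReal_natCast]
  obtain ⟨u, hu, hYsum⟩ := exists_unitary_sum_conj_diagonal_conjPart hx e hT
    (by rw [← map_sum, hsum, map_smul, map_one, ← Algebra.algebraMap_eq_smul_one, map_natCast])
  rw [finrank_euclideanSpace_fin] at hYsum
  refine ⟨_, fun j => isHermitian_conjTranspose_mul_mul _ ?_, hYsum, fun j => ?_⟩
  · simp [IsHermitian, diagonal_conjTranspose, Pi.star_def]
  · exact eigVec_eq_of_conj_diagonal _ (hu j)
      (fun p q hpq => Nat.cast_le.2 (antitone_conjPart (x j) hpq)) (Equiv.refl _) (by simp)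

theorem conjPart_mem_horn {r m : ℕ} {a b c : Fin r → ℕ} (ha : ∀ i, a i ≤ m) (hb : ∀ i, b i ≤ m)
    (hc : ∀ i, c i ≤ m)
    (h : ((fun i => (a i : ℝ)), (fun i => (b i : ℝ)), (fun i => (c i : ℝ))) ∈ Horn r) :
    ((fun q : Fin m => (conjPart a q : ℝ)), (fun q : Fin m => (conjPart b q : ℝ)),
      (fun q : Fin m => (conjPart c q : ℝ))) ∈ Horn m := by
  obtain ⟨X, Y, hX, hY, hXa, hYb, hXYc⟩ := h
  dsimp only at hXa hYb hXYc
  set Z := (m : ℂ) • 1 - (X + Y) with hZ_def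
  have hZ : Z.IsHermitian := IsHermitian.sub (by simp [IsHermitian]) (hX.add hY)
  have hZc : eigVec Z hZ = fun i => ((m - c i.rev : ℕ) : ℝ) := by
    rw [eigVec_eq_sub_of_add_eq (hX.add hY) hZ (c := m) (by simp [hZ_def]), ← hXYc]
    simp only [Nat.cast_sub (hc _)]
  obtain ⟨W, hW, hsum, heig⟩ := exists_sum_eq_smul_one_eigVec_eq_conjPart (m := m)
    (X := ![X, Y, Z]) (x := ![a, b, fun i => m - c i.rev])
    (by simp [Fin.forall_fin_succ, hX, hY, hZ]) (by simp [Fin.sum_univ_three, hZ_def])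
    (by simp [Fin.forall_fin_succ, ha, hb]) (by
      simp only [Fin.forall_fin_succ]
      exact ⟨hXa.symm, hYb.symm, hZc, fun j => j.elim0⟩)
  have hsum' : W 2 + (W 0 + W 1) = ((r : ℝ) : ℂ) • 1 := by
    rw [Complex.ofReal_natCast, ← hsum, Fin.sum_univ_three, add_comm]
  refine ⟨W 0, W 1, hW 0, hW 1, (heig 0).symm, (heig 1).symm, ?_⟩
  rw [eigVec_eq_sub_of_add_eq (hW 2) _ hsum', heig]
  funext q
  have hperm : conjPart (fun i : Fin r => m - c i.rev) q.rev = conjPart (fun i => m - c i) q.rev :=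
    conjPart_comp_equiv (fun i => m - c i) Fin.revPerm q.rev
  have hadd := conjPart_add_conjPart_sub hc q
  rw [Fintype.card_fin, ← hperm] at hadd
  have hcast : (conjPart c q : ℝ) + conjPart (fun i : Fin r => m - c i.rev) q.rev = r :=
    mod_cast hadd
  exact eq_sub_of_add_eq hcast

/-! ### The partition of a set of indices -/

section OrderEmb

variable {α : Type*} [LinearOrder α] {r : ℕ} {A : Finset α}

theorem lt_card_filter_lt_iff (h : A.card = r) (t : Fin r) (y : α) :
    (t : ℕ) < (A.filter (· < y)).card ↔ A.orderEmbOfFin h t < y := by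
  constructor
  · contrapose!
    intro hy
    have hsub : A.filter (· < y) ⊆ (Finset.Iio t).map (A.orderEmbOfFin h).toEmbedding := by
      intro a ha
      obtain ⟨haA, hay⟩ := Finset.mem_filter.1 ha
      obtain ⟨s, rfl⟩ : a ∈ Set.range (A.orderEmbOfFin h) := by rwa [Finset.range_orderEmbOfFin]
      exact Finset.mem_map_of_mem _ (Finset.mem_Iio.2
        ((A.orderEmbOfFin h).lt_iff_lt.1 (hay.trans_le hy)))
    simpa using Finset.card_le_card hsub
  · intro hy
    have hsub : (Finset.Iic t).map (A.orderEmbOfFin h).toEmbedding ⊆ A.filter (· < y) := by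
      intro a ha
      obtain ⟨s, hs, rfl⟩ := Finset.mem_map.1 ha
      exact Finset.mem_filter.2 ⟨Finset.orderEmbOfFin_mem A h s,
        ((A.orderEmbOfFin h).monotone (Finset.mem_Iic.1 hs)).trans_lt hy⟩
    simpa [Nat.succ_le_iff] using Finset.card_le_card hsub

theorem card_filter_orderEmbOfFin (h : A.card = r) (p : α → Prop) [DecidablePred p] :
    (A.filter p).card = (Finset.univ.filter fun i => p (A.orderEmbOfFin h i)).card := by
  conv_lhs => rw [← Finset.map_orderEmbOfFin_univ A h, Finset.filter_map, Finset.card_map]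
  rfl

theorem card_filter_lt_orderEmbOfFin (h : A.card = r) (i : Fin r) :
    (A.filter (· < A.orderEmbOfFin h i)).card = i := by
  simp only [card_filter_orderEmbOfFin h, OrderEmbedding.lt_iff_lt, Finset.filter_gt_eq_Iio,
    Fin.card_Iio]

end OrderEmb

section MuVec

variable {n r m : ℕ} {A : Finset (Fin n)}

/-- The parts of the partition `μ(A)`: subtracting from an element of `A` the number of smaller
elements of `A` leaves the number of smaller elements outside `A`. -/
def muPart (A : Finset (Fin n)) (h : A.card = r) (k : Fin r) : ℕ :=
  (Aᶜ.filter (· < A.orderEmbOfFin h k.rev)).card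

theorem muVec_eq_muPart (h : A.card = r) : muVec A h = fun k => (muPart A h k : ℝ) := by
  funext k
  have hsplit : (A.filter (· < A.orderEmbOfFin h k.rev)).card + muPart A h k =
      (A.orderEmbOfFin h k.rev : Fin n) := by
    rw [muPart, ← Finset.card_union_of_disjoint
      (Finset.disjoint_filter_filter disjoint_compl_right), ← Finset.filter_union,
      Finset.union_compl, Finset.filter_gt_eq_Iio, Fin.card_Iio]
  rw [card_filter_lt_orderEmbOfFin] at hsplit
  have hcast : ((k.rev : ℕ) : ℝ) + muPart A h k = (A.orderEmbOfFin h k.rev : Fin n) :=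
    mod_cast hsplit
  exact (eq_sub_of_add_eq' hcast).symm

theorem orderEmbOfFin_compl_opp (h : Aᶜ.card = m) (h' : ((opp A)ᶜ).card = m) (k : Fin m) :
    ((opp A)ᶜ).orderEmbOfFin h' k.rev = (Aᶜ.orderEmbOfFin h k).rev := by
  have hunique : (fun k : Fin m => (Aᶜ.orderEmbOfFin h k.rev).rev) =
      ((opp A)ᶜ).orderEmbOfFin h' := by
    refine Finset.orderEmbOfFin_unique h' (fun x => ?_) fun x y hxy => ?_
    · have hx := Finset.orderEmbOfFin_mem Aᶜ h x.rev
      rw [Finset.mem_compl] at hx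
      simpa [opp] using hx
    · exact Fin.rev_lt_rev.2 ((Aᶜ.orderEmbOfFin h).strictMono (Fin.rev_lt_rev.2 hxy))
  simp [← hunique]

theorem muPart_compl_opp (hA : A.card = r) (h : Aᶜ.card = m) (h' : ((opp A)ᶜ).card = m)
    (k : Fin m) : muPart (opp A)ᶜ h' k = conjPart (muPart A hA) k := by
  calc
    muPart (opp A)ᶜ h' k = (A.filter (Aᶜ.orderEmbOfFin h k < ·)).card := by
      rw [muPart, orderEmbOfFin_compl_opp h h', compl_compl, opp, Finset.filter_image,
        Finset.card_image_of_injective _ Fin.rev_injective]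
      simp only [Fin.rev_lt_rev]
    _ = (Finset.univ.filter fun i : Fin r => Aᶜ.orderEmbOfFin h k < A.orderEmbOfFin hA i).card :=
      card_filter_orderEmbOfFin hA _
    _ = conjPart ((muPart A hA) ∘ Fin.revPerm) k := by
      simp [conjPart, muPart, lt_card_filter_lt_iff h]
    _ = conjPart (muPart A hA) k := conjPart_comp_equiv _ _ _

theorem opp_compl_opp_compl (A : Finset (Fin n)) : (opp (opp A)ᶜ)ᶜ = A := by
  ext a
  simp [opp, Fin.rev_eq_iff]

theorem muVec_compl_opp_mem_horn {I J K : Finset (Fin n)} (hI : I.card = r)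
    (hJ : J.card = r) (hK : K.card = r) (hI' : ((opp I)ᶜ).card = m) (hJ' : ((opp J)ᶜ).card = m)
    (hK' : ((opp K)ᶜ).card = m) (h : (muVec I hI, muVec J hJ, muVec K hK) ∈ Horn r) :
    (muVec (opp I)ᶜ hI', muVec (opp J)ᶜ hJ', muVec (opp K)ᶜ hK') ∈ Horn m := by
  have hcompl {A : Finset (Fin n)} (hA : ((opp A)ᶜ).card = m) : Aᶜ.card = m := by
    rwa [Finset.card_compl, opp, Finset.card_image_of_injective _ Fin.rev_injective,
      ← Finset.card_compl] at hA
  have hle {A : Finset (Fin n)} (hA : A.card = r) (hA' : ((opp A)ᶜ).card = m) (i : Fin r) :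
      muPart A hA i ≤ m := hcompl hA' ▸ Finset.card_filter_le _ _
  simp only [muVec_eq_muPart] at h
  simpa only [muVec_eq_muPart, muPart_compl_opp hI (hcompl hI') hI',
    muPart_compl_opp hJ (hcompl hJ') hJ', muPart_compl_opp hK (hcompl hK') hK'] using
    conjPart_mem_horn (hle hI hI') (hle hJ hJ') (hle hK hK') h

end MuVec

theorem stmt_19 (n r : ℕ) (hr : 1 ≤ r) (hrn : r < n)
    (I J K : Finset (Fin n)) (hI : I.card = r) (hJ : J.card = r) (hK : K.card = r) :
    (muVec I hI, muVec J hJ, muVec K hK) ∈ Horn r ↔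
      (muVec ((opp I)ᶜ)
          (by simp [opp, Finset.card_compl,
            Finset.card_image_of_injective _ Fin.rev_injective, hI]),
        muVec ((opp J)ᶜ)
          (by simp [opp, Finset.card_compl,
            Finset.card_image_of_injective _ Fin.rev_injective, hJ]),
        muVec ((opp K)ᶜ)
          (by simp [opp, Finset.card_compl,
            Finset.card_image_of_injective _ Fin.rev_injective, hK])) ∈ Horn (n - r) := by
  refine ⟨muVec_compl_opp_mem_horn hI hJ hK _ _ _, fun h => ?_⟩
  have hcard {A : Finset (Fin n)} (hA : A.card = r) : ((opp (opp A)ᶜ)ᶜ).card = r := by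
    rwa [opp_compl_opp_compl]
  have hmu {A : Finset (Fin n)} (hA : A.card = r) : muVec _ (hcard hA) = muVec A hA := by
    congr 1
    exact opp_compl_opp_compl A
  have hdual := muVec_compl_opp_mem_horn _ _ _ (hcard hI) (hcard hJ) (hcard hK) h
  rwa [hmu hI, hmu hJ, hmu hK] at hdual
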